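/- arXiv:2010.00478 — 2 statements merged into one kernel-verified Lean document; each statement's English description precedes it below -/
import Mathlib

section
/- Let m and r be positive integers and let μ₁, …, μ_m be probability measures on ℝ, each absolutely continuous with respect to the Lebesgue measure. Then there exist real numbers t₁ ≤ t₂ ≤ … ≤ t_{(r−1)m} and an assignment c : {0, 1, …, (r−1)m} → {1, …, r} of the (r−1)m + 1 resulting intervals (with t₀ = −∞ and t_{(r−1)m+1} = +∞) to r parts A₁, …, A_r, where A_j is the union of the intervals [t_k, t_{k+1}] with c(k) = j, such that μ_i(A_j) = 1/r for every i = 1, …, m and every j = 1, …, r. -/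
open MeasureTheory

/-!
Let `r = p` be prime and `N = (p - 1) m`. A partition of `[0, 1]` into `N + 1` intervals coloured by
`ℤ/p` is a point of the join of `N + 1` copies of `ℤ/p`, and the excesses of the `p` parts over
their fair shares form an equivariant map into the families of `m` vectors indexed by `ℤ/p` with sum
zero. Suppose that it has no zero. On a fine subdivision of the join, attach to a simplex and a
measure the set of residues whose excess is bounded below by a fixed `ε > 0` at some vertex: it is
never all of `ℤ/p`, and for some measure it is nonempty, so that the mean of such a set is an
equivariant label in `ℤ/p`. Along a flag of simplices whose labels are successively distinct the
total size of the sets grows strictly, from at least `1` to at most `N`, so no flag with `N + 1`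
members has this property.

On the other hand the join carries an equivariant chain map from the periodic resolution of `ℤ` over
`ℤ[ℤ/p]` in degrees at most `N`. It survives subdivision, and pairing its image under the labelling
with the cup powers of the carry cocycle, multiplied by the gap cocycle in odd degrees, gives a
nonzero value in degree `N`, although these cochains vanish on simplices with two equal consecutive
vertices.

The sigmoid brings the line into `[0, 1]`. For composite `r = a b`, split into `a` parts and then
each part into `b` parts: this takes `(a - 1) m + a (b - 1) m = (a b - 1) m` cuts.
-/

namespace NecklaceSplitting

open Finsupp (single)

section OrderedChains

variable {X Y M : Type*} [AddCommGroup M]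

/-- Integral chains on ordered simplices with vertices in `X`. A simplex is the list of its
vertices, repetitions allowed; the empty list has degree `-1`, so the complex is augmented. -/
abbrev OrderedChain (X : Type*) := List X →₀ ℤ

/-- The chains all of whose simplices lie in `S`. -/
abbrev chainsOn (S : Set (List X)) : Submodule ℤ (OrderedChain X) := Finsupp.supported ℤ ℤ S

variable {S : Set (List X)} {T : Set (List Y)} {c : OrderedChain X}

theorem single_mem_chainsOn {σ : List X} (hσ : σ ∈ S) : single σ 1 ∈ chainsOn S :=
  Finsupp.single_mem_supported ℤ 1 hσ

theorem map_mem_of_mem_chainsOn {L : OrderedChain X →ₗ[ℤ] M} {P : Submodule ℤ M}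
    (h : ∀ σ ∈ S, L (single σ 1) ∈ P) (hc : c ∈ chainsOn S) : L c ∈ P := by
  suffices chainsOn S ≤ P.comap L from this hc
  rw [chainsOn, Finsupp.supported_eq_span_single, Submodule.span_le]
  exact Set.image_subset_iff.2 h

theorem map_eq_map_of_mem_chainsOn {L L' : OrderedChain X →ₗ[ℤ] M}
    (h : ∀ σ ∈ S, L (single σ 1) = L' (single σ 1)) (hc : c ∈ chainsOn S) : L c = L' c := by
  rw [chainsOn, Finsupp.supported_eq_span_single] at hc
  exact LinearMap.eqOn_span (Set.forall_mem_image.2 h) hc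

theorem map_eq_map {L L' : OrderedChain X →ₗ[ℤ] M}
    (h : ∀ σ, L (single σ 1) = L' (single σ 1)) (c : OrderedChain X) : L c = L' c :=
  map_eq_map_of_mem_chainsOn (S := Set.univ) (fun σ _ ↦ h σ) (by simp [chainsOn])

/-- The cone operator, which prepends the apex `x` to every simplex. -/
noncomputable def cone (x : X) : OrderedChain X →ₗ[ℤ] OrderedChain X :=
  Finsupp.lmapDomain ℤ ℤ (List.cons x)

theorem cone_single (x : X) (σ : List X) (a : ℤ) : cone x (single σ a) = single (x :: σ) a := by
  simp [cone]

theorem cone_mem_chainsOn {S' : Set (List X)} {x : X} (h : ∀ σ ∈ S, x :: σ ∈ S')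
    (hc : c ∈ chainsOn S) : cone x c ∈ chainsOn S' :=
  map_mem_of_mem_chainsOn (fun σ hσ ↦ by
    rw [cone_single]; exact single_mem_chainsOn (h σ hσ)) hc

/-- The chain map induced by a map of vertices. -/
noncomputable def push (g : X → Y) : OrderedChain X →ₗ[ℤ] OrderedChain Y :=
  Finsupp.lmapDomain ℤ ℤ (List.map g)

theorem push_single (g : X → Y) (σ : List X) (a : ℤ) :
    push g (single σ a) = single (σ.map g) a := by
  simp [push]

theorem push_mem_chainsOn {g : X → Y} (h : ∀ σ ∈ S, σ.map g ∈ T) (hc : c ∈ chainsOn S) :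
    push g c ∈ chainsOn T :=
  map_mem_of_mem_chainsOn (fun σ hσ ↦ by
    rw [push_single]; exact single_mem_chainsOn (h σ hσ)) hc

theorem push_cone (g : X → Y) (x : X) (c : OrderedChain X) :
    push g (cone x c) = cone (g x) (push g c) :=
  map_eq_map (L := push g ∘ₗ cone x) (L' := cone (g x) ∘ₗ push g)
    (fun σ ↦ by simp [cone_single, push_single]) c

theorem push_id : push (id : X → X) = 1 := by
  simp [push, Finsupp.lmapDomain_id, Module.End.one_eq_id]

theorem push_pow (g : X → X) (j : ℕ) : push g ^ j = push g^[j] := by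
  induction j with
  | zero => rw [pow_zero, Function.iterate_zero, push_id]
  | succ j ih =>
    rw [pow_succ, ih]
    exact LinearMap.ext (map_eq_map fun σ ↦ by simp [push_single])

/-- The alternating sum of the codimension one faces of a simplex. -/
noncomputable def simplexBoundary : List X → OrderedChain X
  | [] => 0
  | x :: σ => single σ 1 - cone x (simplexBoundary σ)

/-- The augmented boundary operator: the boundary of `[x]` is the empty simplex. -/
noncomputable def boundary : OrderedChain X →ₗ[ℤ] OrderedChain X :=
  Finsupp.linearCombination ℤ simplexBoundary

theorem boundary_single (σ : List X) : boundary (single σ 1) = simplexBoundary σ := by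
  simp [boundary]

theorem boundary_cone (x : X) (c : OrderedChain X) :
    boundary (cone x c) = c - cone x (boundary c) :=
  map_eq_map (L := boundary ∘ₗ cone x) (L' := LinearMap.id - cone x ∘ₗ boundary)
    (fun σ ↦ by simp [cone_single, boundary_single, simplexBoundary]) c

theorem boundary_simplexBoundary (σ : List X) : boundary (simplexBoundary σ) = 0 := by
  induction σ with
  | nil => simp [simplexBoundary]
  | cons x σ ih => simp [simplexBoundary, boundary_single, boundary_cone, ih]

theorem simplexBoundary_mem_chainsOn (σ : List X) :
    simplexBoundary σ ∈ chainsOn {τ | τ.Sublist σ ∧ τ.length + 1 = σ.length} := by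
  induction σ with
  | nil => exact Submodule.zero_mem _
  | cons x σ ih =>
    refine Submodule.sub_mem _ (single_mem_chainsOn (by simp)) (cone_mem_chainsOn ?_ ih)
    rintro τ ⟨hsub, hlen⟩
    exact ⟨hsub.cons_cons x, by simp [hlen]⟩

theorem push_simplexBoundary (g : X → Y) (σ : List X) :
    push g (simplexBoundary σ) = simplexBoundary (σ.map g) := by
  induction σ with
  | nil => simp [simplexBoundary]
  | cons x σ ih => simp [simplexBoundary, push_single, push_cone, ih]

theorem push_boundary (g : X → Y) (c : OrderedChain X) :
    push g (boundary c) = boundary (push g c) :=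
  map_eq_map (L := push g ∘ₗ boundary) (L' := boundary ∘ₗ push g)
    (fun σ ↦ by simp [boundary_single, push_single, push_simplexBoundary]) c

end OrderedChains

section Subdivision

variable {X Y : Type*}

/-- Barycentric subdivision of chains of simplices with `n` vertices, where `b σ` plays the role of
the barycenter of `σ`: each simplex is replaced by the cone from `b σ` over its subdivided boundary.
With `b` a labelling, the same formula is the simplicial map sending the barycenter of each face to
its label. Only the values on simplices with `n` vertices are meaningful. -/
noncomputable def subdivide (b : List X → Y) : ℕ → OrderedChain X →ₗ[ℤ] OrderedChain Y
  | 0 => (Finsupp.lapply []).smulRight (single [] 1)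
  | n + 1 => Finsupp.linearCombination ℤ fun σ ↦ cone (b σ) (subdivide b n (simplexBoundary σ))

theorem subdivide_zero_single_nil (b : List X → Y) :
    subdivide b 0 (single [] 1) = single [] 1 := by
  simp [subdivide]

theorem subdivide_succ_single (b : List X → Y) (n : ℕ) (σ : List X) :
    subdivide b (n + 1) (single σ 1) = cone (b σ) (subdivide b n (simplexBoundary σ)) := by
  simp [subdivide]

theorem boundary_subdivide (b : List X → Y) (n : ℕ) (c : OrderedChain X) :
    boundary (subdivide b (n + 1) c) = subdivide b n (boundary c) := by
  have of_cycle (n : ℕ) (h : ∀ σ, boundary (subdivide b n (simplexBoundary σ)) = 0)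
      (c : OrderedChain X) : boundary (subdivide b (n + 1) c) = subdivide b n (boundary c) :=
    map_eq_map (L := boundary ∘ₗ subdivide b (n + 1)) (L' := subdivide b n ∘ₗ boundary)
      (fun σ ↦ by simp [subdivide_succ_single, boundary_single, boundary_cone, h]) c
  induction n generalizing c with
  | zero => exact of_cycle 0 (fun σ ↦ by simp [subdivide, boundary, simplexBoundary]) c
  | succ n ih =>
    exact of_cycle (n + 1) (fun σ ↦ by rw [ih, boundary_simplexBoundary, map_zero]) c

theorem push_subdivide {S : Set (List X)} (hS : ∀ σ ∈ S, ∀ τ : List X, τ.Sublist σ → τ ∈ S)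
    {b : List X → Y} {g : X → X} {g' : Y → Y} (hb : ∀ σ ∈ S, σ ≠ [] → b (σ.map g) = g' (b σ))
    (n : ℕ) {c : OrderedChain X} (hc : c ∈ chainsOn S) :
    push g' (subdivide b n c) = subdivide b n (push g c) := by
  induction n generalizing c with
  | zero =>
    refine map_eq_map (L := push g' ∘ₗ subdivide b 0) (L' := subdivide b 0 ∘ₗ push g) (fun σ ↦ ?_) c
    cases σ <;> simp [subdivide, push_single]
  | succ n ih =>
    refine map_eq_map_of_mem_chainsOn (L := push g' ∘ₗ subdivide b (n + 1))
      (L' := subdivide b (n + 1) ∘ₗ push g) (fun σ hσ ↦ ?_) hc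
    simp only [LinearMap.comp_apply, subdivide_succ_single, push_single, push_cone]
    rcases eq_or_ne σ [] with rfl | hne
    · simp [simplexBoundary]
    · have hfaces : simplexBoundary σ ∈ chainsOn S :=
        Finsupp.supported_mono (fun τ hτ ↦ hS σ hσ τ hτ.1) (simplexBoundary_mem_chainsOn σ)
      rw [hb σ hσ hne, ih hfaces, push_simplexBoundary]

/-- `IsFlag b σ τ` says that `τ` lists the values of `b` along a complete flag of nonempty faces of
`σ`, from `σ` down to a vertex. These are the simplices of the subdivision of `σ`. -/
inductive IsFlag (b : List X → Y) : List X → List Y → Prop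
  | nil : IsFlag b [] []
  | cons {σ σ' : List X} {τ : List Y} (hsub : σ'.Sublist σ) (hlen : σ'.length + 1 = σ.length)
      (hτ : IsFlag b σ' τ) : IsFlag b σ (b σ :: τ)

theorem IsFlag.length_eq {b : List X → Y} {σ : List X} {τ : List Y} (h : IsFlag b σ τ) :
    τ.length = σ.length := by
  induction h with
  | nil => rfl
  | cons _ hlen _ ih => rw [List.length_cons, ih, hlen]

theorem subdivide_single_mem_chainsOn_isFlag (b : List X → Y) (σ : List X) :
    subdivide b σ.length (single σ 1) ∈ chainsOn {τ | IsFlag b σ τ} := by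
  induction hn : σ.length generalizing σ with
  | zero =>
    rw [List.length_eq_zero_iff] at hn
    rw [hn, subdivide_zero_single_nil]
    exact single_mem_chainsOn IsFlag.nil
  | succ n ih =>
    rw [subdivide_succ_single]
    suffices subdivide b n (simplexBoundary σ) ∈ chainsOn {τ | IsFlag b σ (b σ :: τ)} from
      cone_mem_chainsOn (fun τ hτ ↦ hτ) this
    refine map_mem_of_mem_chainsOn (fun σ' hσ' ↦ ?_) (simplexBoundary_mem_chainsOn σ)
    have hσ'n : σ'.length = n := by have := hσ'.2; omega
    exact Finsupp.supported_mono (fun τ hτ ↦ .cons hσ'.1 hσ'.2 hτ) (ih σ' hσ'n)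

theorem subdivide_mem_chainsOn {S : Set (List X)} {T : Set (List Y)} {b : List X → Y} {n : ℕ}
    {c : OrderedChain X} (h : ∀ σ ∈ S, σ.length = n → ∀ τ, IsFlag b σ τ → τ ∈ T)
    (hlen : c ∈ chainsOn {σ | σ.length = n}) (hc : c ∈ chainsOn S) :
    subdivide b n c ∈ chainsOn T := by
  have hmem : c ∈ chainsOn ({σ | σ.length = n} ∩ S) := by
    rw [chainsOn, Finsupp.supported_inter]
    exact ⟨hlen, hc⟩
  refine map_mem_of_mem_chainsOn ?_ hmem
  rintro σ ⟨rfl, hσ⟩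
  exact Finsupp.supported_mono (h σ hσ rfl) (subdivide_single_mem_chainsOn_isFlag b σ)

end Subdivision

section Towers

variable {X Y : Type*}

/-- The differentials `g - 1` (in even degrees) and `1 + g + ⋯ + g ^ (p - 1)` (in odd degrees) of
the periodic resolution of `ℤ` over the group ring of `ℤ/p`, acting on chains through `g`. -/
noncomputable def periodicDiff (p : ℕ) (g : X → X) (k : ℕ) : OrderedChain X →ₗ[ℤ] OrderedChain X :=
  if Even k then push g - 1 else ∑ j ∈ Finset.range p, push g ^ j

theorem periodicDiff_succ_periodicDiff {p : ℕ} {g : X → X} (hg : g^[p] = id) (k : ℕ)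
    (c : OrderedChain X) : periodicDiff p g (k + 1) (periodicDiff p g k c) = 0 := by
  have hpow : push g ^ p = 1 := by rw [push_pow, hg, push_id]
  rw [← Module.End.mul_apply]
  by_cases hk : Even k
  · simp [periodicDiff, hk, Nat.even_add_one, geom_sum_mul, hpow]
  · simp [periodicDiff, hk, Nat.even_add_one, mul_geom_sum, hpow]

theorem map_periodicDiff (p : ℕ) {L : OrderedChain X →ₗ[ℤ] OrderedChain Y} {g : X → X} {g' : Y → Y}
    {P : Submodule ℤ (OrderedChain X)} (hP : ∀ c ∈ P, push g c ∈ P)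
    (hL : ∀ c ∈ P, push g' (L c) = L (push g c)) (k : ℕ) {c : OrderedChain X} (hc : c ∈ P) :
    L (periodicDiff p g k c) = periodicDiff p g' k (L c) := by
  have hpow (j : ℕ) : ∀ c ∈ P, L ((push g ^ j) c) = (push g' ^ j) (L c) := by
    induction j with
    | zero => simp
    | succ j ih => intro c hc; simp [pow_succ, hL c hc, ih _ (hP c hc)]
  unfold periodicDiff
  split_ifs
  · simp [hL c hc]
  · simp [hpow _ c hc]

theorem periodicDiff_mem (p : ℕ) {g : X → X} {P : Submodule ℤ (OrderedChain X)}
    (hP : ∀ c ∈ P, push g c ∈ P) (k : ℕ) {c : OrderedChain X} (hc : c ∈ P) :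
    periodicDiff p g k c ∈ P := by
  have hpow (j : ℕ) : (push g ^ j) c ∈ P := by
    induction j with
    | zero => simpa
    | succ j ih => rw [pow_succ']; exact hP _ ih
  unfold periodicDiff
  split_ifs
  · exact P.sub_mem (hP c hc) hc
  · rw [LinearMap.sum_apply]
    exact P.sum_mem fun j _ ↦ hpow j

theorem boundary_periodicDiff (p : ℕ) (g : X → X) (k : ℕ) (c : OrderedChain X) :
    boundary (periodicDiff p g k c) = periodicDiff p g k (boundary c) :=
  map_periodicDiff p (P := ⊤) (by simp) (fun c _ ↦ push_boundary g c) k trivial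

/-- The chains `f 0, …, f N` are the images of the generators under a chain map from the periodic
resolution of `ℤ` over the group ring of `ℤ/p`, a generator of `ℤ/p` acting through `g`. -/
structure IsTower (p : ℕ) (g : X → X) (N : ℕ) (f : ℕ → OrderedChain X) : Prop where
  length_eq : ∀ k ≤ N, f k ∈ chainsOn {σ | σ.length = k + 1}
  boundary_zero : boundary (f 0) = single [] 1
  boundary_succ : ∀ k < N, boundary (f (k + 1)) = periodicDiff p g k (f k)

theorem IsTower.subdivide {p N : ℕ} {g : X → X} {g' : Y → Y} {f : ℕ → OrderedChain X}
    (hf : IsTower p g N f) {S : Set (List X)}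
    (hS : ∀ σ ∈ S, ∀ τ : List X, τ.Sublist σ → τ ∈ S) (hSg : ∀ σ ∈ S, σ.map g ∈ S)
    (hfS : ∀ k ≤ N, f k ∈ chainsOn S) {b : List X → Y}
    (hb : ∀ σ ∈ S, σ ≠ [] → b (σ.map g) = g' (b σ)) :
    IsTower p g' N fun k ↦ subdivide b (k + 1) (f k) where
  length_eq k hk :=
    subdivide_mem_chainsOn (fun _ _ hσ _ hτ ↦ hτ.length_eq.trans hσ) (hf.length_eq k hk)
      (hf.length_eq k hk)
  boundary_zero := by rw [boundary_subdivide, hf.boundary_zero, subdivide_zero_single_nil]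
  boundary_succ k hk := by
    rw [boundary_subdivide, hf.boundary_succ k hk]
    exact map_periodicDiff p (fun c hc ↦ push_mem_chainsOn hSg hc)
      (fun c hc ↦ push_subdivide hS hb (k + 1) hc) k (hfS k hk.le)

/-- The tower obtained by successively coning off with apexes `e 0, e 1, …`. -/
noncomputable def coneTower (p : ℕ) (g : X → X) (e : ℕ → X) : ℕ → OrderedChain X
  | 0 => single [e 0] 1
  | k + 1 => cone (e (k + 1)) (periodicDiff p g k (coneTower p g e k))

theorem coneTower_mem_chainsOn (p : ℕ) {g : X → X} {e : ℕ → X} {N : ℕ} {S : ℕ → Set (List X)}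
    (hzero : [e 0] ∈ S 0) (hmap : ∀ k, ∀ σ ∈ S k, σ.map g ∈ S k)
    (hcons : ∀ k < N, ∀ σ ∈ S k, e (k + 1) :: σ ∈ S (k + 1)) :
    ∀ k ≤ N, coneTower p g e k ∈ chainsOn (S k)
  | 0, _ => single_mem_chainsOn hzero
  | k + 1, hk => cone_mem_chainsOn (hcons k hk) <|
      periodicDiff_mem p (fun _ hc ↦ push_mem_chainsOn (hmap k) hc) k <|
        coneTower_mem_chainsOn p hzero hmap hcons k (k.le_succ.trans hk)

theorem periodicDiff_boundary_coneTower {p : ℕ} {g : X → X} (hg : g^[p] = id) (e : ℕ → X) (k : ℕ) :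
    periodicDiff p g k (boundary (coneTower p g e k)) = 0 := by
  induction k with
  | zero => simp [coneTower, boundary_single, simplexBoundary, periodicDiff, push_single]
  | succ k ih =>
    rw [coneTower, boundary_cone, boundary_periodicDiff, ih, map_zero, sub_zero,
      periodicDiff_succ_periodicDiff hg]

theorem isTower_coneTower {p : ℕ} {g : X → X} (hg : g^[p] = id) (e : ℕ → X) (N : ℕ) :
    IsTower p g N (coneTower p g e) where
  length_eq := coneTower_mem_chainsOn p (by simp) (by simp) (by simp)
  boundary_zero := by simp [coneTower, boundary_single, simplexBoundary]
  boundary_succ k _ := by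
    rw [coneTower, boundary_cone, boundary_periodicDiff, periodicDiff_boundary_coneTower hg,
      map_zero, sub_zero]

end Towers

section Cochains

variable {p : ℕ}

/-- The representative of `b - a` in `{0, …, p - 1}`, an integral lift of the generator of
`H¹(ℤ/p; ℤ/p)`. -/
def gap (a b : ZMod p) : ℤ := (b - a).val

/-- The carry of the addition `(b - a) + (c - b)`, a cocycle generating `H²(ℤ/p; ℤ)`. -/
def carry (a b c : ZMod p) : ℤ := if p ≤ (b - a).val + (c - b).val then 1 else 0

/-- The value on a simplex of the cup powers of `carry`; zero in odd degrees. -/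
def evenWeight : List (ZMod p) → ℤ
  | [] => 0
  | [_] => 1
  | [_, _] => 0
  | a :: b :: c :: σ => carry a b c * evenWeight (c :: σ)

/-- The value on a simplex of the cup products of `gap` with the cup powers of `carry`; zero in even
degrees. -/
def oddWeight : List (ZMod p) → ℤ
  | [] => 0
  | [_] => 0
  | a :: b :: σ => gap a b * evenWeight (b :: σ)

/-- The cochain dual to the even generators of the periodic resolution. -/
noncomputable def evenCochain : OrderedChain (ZMod p) →ₗ[ℤ] ℤ :=
  Finsupp.linearCombination ℤ evenWeight

/-- The cochain dual to the odd generators of the periodic resolution. -/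
noncomputable def oddCochain : OrderedChain (ZMod p) →ₗ[ℤ] ℤ :=
  Finsupp.linearCombination ℤ oddWeight

/-- A cochain modulo `p` whose coboundary is `oddCochain`. It is not invariant under translation,
and its defect is `evenCochain`. -/
noncomputable def oddPrimitive : OrderedChain (ZMod p) →ₗ[ℤ] ZMod p :=
  Finsupp.linearCombination ℤ fun σ ↦ σ.headD 0 * evenWeight σ

theorem evenCochain_single (σ : List (ZMod p)) : evenCochain (single σ 1) = evenWeight σ := by
  simp [evenCochain]

theorem oddCochain_single (σ : List (ZMod p)) : oddCochain (single σ 1) = oddWeight σ := by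
  simp [oddCochain]

theorem oddPrimitive_single (σ : List (ZMod p)) :
    oddPrimitive (single σ 1) = σ.headD 0 * evenWeight σ := by
  simp [oddPrimitive]

theorem evenCochain_cone_cone_cone (x y z : ZMod p) (c : OrderedChain (ZMod p)) :
    evenCochain (cone x (cone y (cone z c))) = carry x y z * evenCochain (cone z c) :=
  map_eq_map (L := evenCochain ∘ₗ cone x ∘ₗ cone y ∘ₗ cone z)
    (L' := carry x y z • evenCochain ∘ₗ cone z)
    (fun σ ↦ by simp [cone_single, evenCochain_single, evenWeight]) c

theorem oddCochain_cone_cone (x y : ZMod p) (c : OrderedChain (ZMod p)) :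
    oddCochain (cone x (cone y c)) = gap x y * evenCochain (cone y c) :=
  map_eq_map (L := oddCochain ∘ₗ cone x ∘ₗ cone y) (L' := gap x y • evenCochain ∘ₗ cone y)
    (fun σ ↦ by simp [cone_single, evenCochain_single, oddCochain_single, oddWeight]) c

theorem oddPrimitive_cone (x : ZMod p) (c : OrderedChain (ZMod p)) :
    oddPrimitive (cone x c) = x * evenCochain (cone x c) :=
  map_eq_map (L := oddPrimitive ∘ₗ cone x)
    (L' := LinearMap.mulLeft ℤ x ∘ₗ (Int.castAddHom (ZMod p)).toIntLinearMap ∘ₗ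
      evenCochain ∘ₗ cone x)
    (fun σ ↦ by simp [cone_single, evenCochain_single, oddPrimitive_single]) c

theorem evenWeight_map_add_one (σ : List (ZMod p)) :
    evenWeight (σ.map (· + 1)) = evenWeight σ := by
  match σ with
  | [] | [_] | [_, _] => simp [evenWeight]
  | a :: b :: c :: σ =>
    have ih := evenWeight_map_add_one (c :: σ)
    simp only [List.map_cons, evenWeight, carry, add_sub_add_right_eq_sub] at ih ⊢
    rw [ih]

theorem oddWeight_map_add_one (σ : List (ZMod p)) : oddWeight (σ.map (· + 1)) = oddWeight σ := by
  match σ with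
  | [] | [_] => simp [oddWeight]
  | a :: b :: σ =>
    have h := evenWeight_map_add_one (b :: σ)
    simp only [List.map_cons, oddWeight, gap, add_sub_add_right_eq_sub] at h ⊢
    rw [h]

theorem oddCochain_push_pow (j : ℕ) (c : OrderedChain (ZMod p)) :
    oddCochain ((push (· + 1) ^ j) c) = oddCochain c := by
  induction j generalizing c with
  | zero => simp
  | succ j ih =>
    rw [pow_succ, Module.End.mul_apply, ih]
    exact map_eq_map (L := oddCochain ∘ₗ push (· + 1))
      (fun σ ↦ by simp [push_single, oddCochain_single, oddWeight_map_add_one]) c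

theorem oddPrimitive_push (c : OrderedChain (ZMod p)) :
    oddPrimitive (push (· + 1) c) = oddPrimitive c + (evenCochain c : ZMod p) := by
  refine map_eq_map (L := oddPrimitive ∘ₗ push (· + 1))
    (L' := oddPrimitive + (Int.castAddHom (ZMod p)).toIntLinearMap ∘ₗ evenCochain) (fun σ ↦ ?_) c
  cases σ with
  | nil => simp [push_single, oddPrimitive_single, evenCochain_single, evenWeight]
  | cons a σ =>
    have h := evenWeight_map_add_one (a :: σ)
    rw [List.map_cons] at h
    simp [push_single, oddPrimitive_single, evenCochain_single, h, add_mul]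

variable {N : ℕ} {f : ℕ → OrderedChain (ZMod p)}

theorem IsTower.evenCochain_zero (hf : IsTower p (· + 1) N f) : evenCochain (f 0) = 1 := by
  calc evenCochain (f 0) = boundary (f 0) [] :=
        map_eq_map_of_mem_chainsOn (L' := Finsupp.lapply [] ∘ₗ boundary) (fun σ hσ ↦ by
          obtain ⟨a, rfl⟩ := List.length_eq_one_iff.1 hσ
          simp [boundary_single, evenCochain_single, evenWeight, simplexBoundary])
          (hf.length_eq 0 N.zero_le)
    _ = 1 := by rw [hf.boundary_zero, Finsupp.single_eq_same]

variable [NeZero p]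

theorem natCast_mul_carry (a b c : ZMod p) : p * carry a b c = gap a b + gap b c - gap a c := by
  unfold carry gap
  rw [show c - a = (b - a) + (c - b) by ring]
  split_ifs with h
  · rw [ZMod.val_add_of_le h]
    push_cast [Nat.cast_sub h]
    ring
  · rw [ZMod.val_add_of_lt (not_le.1 h)]
    push_cast
    ring

theorem carry_cocycle (a b c d : ZMod p) :
    carry b c d - carry a c d + carry a b d - carry a b c = 0 := by
  refine mul_left_cancel₀ (Nat.cast_ne_zero.2 (NeZero.ne p) : (p : ℤ) ≠ 0) ?_
  linear_combination natCast_mul_carry b c d - natCast_mul_carry a c d + natCast_mul_carry a b d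
    - natCast_mul_carry a b c

theorem evenCochain_simplexBoundary (σ : List (ZMod p)) : evenCochain (simplexBoundary σ) = 0 := by
  match σ with
  | [] => simp [simplexBoundary]
  | [_] => simp [simplexBoundary, evenCochain_single, evenWeight]
  | [_, _] => simp [simplexBoundary, evenCochain_single, evenWeight, cone_single]
  | [_, _, _] => simp [simplexBoundary, evenCochain_single, evenWeight, cone_single]
  | a :: b :: c :: d :: σ =>
    have ih := evenCochain_simplexBoundary (c :: d :: σ)
    rw [simplexBoundary, map_sub, evenCochain_single] at ih
    rw [simplexBoundary, simplexBoundary, simplexBoundary]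
    simp only [map_sub, evenCochain_cone_cone_cone, cone_single, evenCochain_single, evenWeight]
    linear_combination evenWeight (d :: σ) * carry_cocycle a b c d + carry a b c * ih

theorem evenCochain_cone_simplexBoundary (x : ZMod p) (σ : List (ZMod p)) :
    evenCochain (cone x (simplexBoundary σ)) = evenWeight σ := by
  have h := evenCochain_simplexBoundary (x :: σ)
  rwa [simplexBoundary, map_sub, evenCochain_single, sub_eq_zero, eq_comm] at h

theorem oddCochain_boundary {c : OrderedChain (ZMod p)} (hc : c ∈ chainsOn {σ | 2 ≤ σ.length}) :
    oddCochain (boundary c) = p * evenCochain c := by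
  refine map_eq_map_of_mem_chainsOn (L := oddCochain ∘ₗ boundary) (L' := (p : ℤ) • evenCochain)
    (fun σ hσ ↦ ?_) hc
  simp only [LinearMap.comp_apply, LinearMap.smul_apply, boundary_single, evenCochain_single,
    smul_eq_mul]
  match σ, hσ with
  | [_, _], _ => simp [simplexBoundary, oddCochain_single, oddWeight, evenWeight, cone_single]
  | a :: b :: c :: σ, _ =>
    rw [simplexBoundary, simplexBoundary]
    simp only [map_sub, oddCochain_cone_cone, evenCochain_cone_simplexBoundary, cone_single,
      oddCochain_single, evenWeight, oddWeight]
    linear_combination -evenWeight (c :: σ) * natCast_mul_carry a b c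

theorem oddPrimitive_boundary (c : OrderedChain (ZMod p)) :
    oddPrimitive (boundary c) = oddCochain c := by
  refine map_eq_map (L := oddPrimitive ∘ₗ boundary)
    (L' := (Int.castAddHom (ZMod p)).toIntLinearMap ∘ₗ oddCochain) (fun σ ↦ ?_) c
  simp only [LinearMap.comp_apply, boundary_single, oddCochain_single]
  match σ with
  | [] => simp [simplexBoundary, oddWeight]
  | [_] => simp [simplexBoundary, oddWeight, evenWeight, oddPrimitive_single]
  | a :: b :: σ =>
    rw [simplexBoundary, map_sub, oddPrimitive_cone, evenCochain_cone_simplexBoundary]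
    simp [oddPrimitive_single, oddWeight, gap, sub_mul]

theorem evenWeight_eq_zero_of_not_isChain {σ : List (ZMod p)} (h : ¬σ.IsChain (· ≠ ·)) :
    evenWeight σ = 0 := by
  match σ with
  | [] | [_] => simp at h
  | [_, _] => rfl
  | a :: b :: c :: σ =>
    by_cases htail : (c :: σ).IsChain (· ≠ ·)
    · have heq : a = b ∨ b = c := by simpa [htail, or_iff_not_imp_left] using h
      rcases heq with rfl | rfl <;> simp [evenWeight, carry, ZMod.val_lt]
    · simp [evenWeight, evenWeight_eq_zero_of_not_isChain htail]

theorem oddWeight_eq_zero_of_not_isChain {σ : List (ZMod p)} (h : ¬σ.IsChain (· ≠ ·)) :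
    oddWeight σ = 0 := by
  match σ with
  | [] | [_] => simp at h
  | a :: b :: σ =>
    by_cases htail : (b :: σ).IsChain (· ≠ ·)
    · have heq : a = b := by simpa [htail] using h
      simp [oddWeight, gap, heq]
    · simp [oddWeight, evenWeight_eq_zero_of_not_isChain htail]

theorem IsTower.evenCochain_succ (hf : IsTower p (· + 1) N f) {k : ℕ} (hk : k < N)
    (hodd : ¬Even k) : evenCochain (f (k + 1)) = oddCochain (f k) := by
  refine mul_left_cancel₀ (Nat.cast_ne_zero.2 (NeZero.ne p) : (p : ℤ) ≠ 0) ?_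
  have hlen : f (k + 1) ∈ chainsOn {σ | 2 ≤ σ.length} :=
    Finsupp.supported_mono (Set.ofPred_subset_ofPred.2 fun σ hσ ↦ by simp [hσ])
      (hf.length_eq (k + 1) hk)
  rw [← oddCochain_boundary hlen, hf.boundary_succ k hk, periodicDiff, if_neg hodd]
  simp [oddCochain_push_pow]

theorem IsTower.oddCochain_succ (hf : IsTower p (· + 1) N f) {k : ℕ} (hk : k < N)
    (heven : Even k) : (oddCochain (f (k + 1)) : ZMod p) = evenCochain (f k) := by
  rw [← oddPrimitive_boundary, hf.boundary_succ k hk, periodicDiff, if_pos heven]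
  simp [oddPrimitive_push]

theorem IsTower.evenCochain_or_oddCochain_eq_one (hf : IsTower p (· + 1) N f) {k : ℕ} (hk : k ≤ N) :
    ((if Even k then evenCochain (f k) else oddCochain (f k) : ℤ) : ZMod p) = 1 := by
  induction k with
  | zero => simp [hf.evenCochain_zero]
  | succ k ih =>
    have ih := ih (k.le_succ.trans hk)
    by_cases heven : Even k
    · simpa [heven, Nat.even_add_one, hf.oddCochain_succ hk] using ih
    · simpa [heven, Nat.even_add_one, hf.evenCochain_succ hk] using ih

/-- This degree argument plays the role of the Borsuk–Ulam theorem. -/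
theorem IsTower.exists_isChain_ne (hp : 1 < p) (hf : IsTower p (· + 1) N f) :
    ∃ σ ∈ (f N).support, σ.IsChain (· ≠ ·) := by
  by_contra! h
  have hdeg : f N ∈ chainsOn {σ | ¬σ.IsChain (· ≠ ·)} := (Finsupp.mem_supported ℤ _).2 h
  have heven : evenCochain (f N) = 0 := map_eq_map_of_mem_chainsOn (L' := 0) (fun σ hσ ↦ by
    simp [evenCochain_single, evenWeight_eq_zero_of_not_isChain hσ]) hdeg
  have hodd : oddCochain (f N) = 0 := map_eq_map_of_mem_chainsOn (L' := 0) (fun σ hσ ↦ by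
    simp [oddCochain_single, oddWeight_eq_zero_of_not_isChain hσ]) hdeg
  have : Fact (1 < p) := ⟨hp⟩
  simpa [heven, hodd] using hf.evenCochain_or_oddCochain_eq_one le_rfl

end Cochains

section Barycenter

variable {W : Type*}

/-- The average of a list of points. The empty list has the junk value `0`. -/
noncomputable def barycenter [AddCommGroup W] [Module ℝ W] (σ : List W) : W :=
  (σ.length : ℝ)⁻¹ • σ.sum

theorem barycenter_map [AddCommGroup W] [Module ℝ W] (g : W →ₗ[ℝ] W) (σ : List W) :
    barycenter (σ.map g) = g (barycenter σ) := by
  simp [barycenter, map_list_sum]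

theorem barycenter_eq_sum [AddCommGroup W] [Module ℝ W] (σ : List W) :
    barycenter σ = ∑ i : Fin σ.length, (σ.length : ℝ)⁻¹ • σ[i] := by
  simp [barycenter, ← Finset.smul_sum, Fin.sum_univ_getElem]

theorem barycenter_mem [AddCommGroup W] [Module ℝ W] {C : Set W} (hC : Convex ℝ C) {σ : List W}
    (hσ : σ ≠ []) (h : ∀ w ∈ σ, w ∈ C) : barycenter σ ∈ C := by
  rw [barycenter_eq_sum]
  refine hC.sum_mem (fun _ _ ↦ by positivity) ?_ fun i _ ↦ h _ (σ.get_mem i)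
  simp [List.length_eq_zero_iff.not.2 hσ]

theorem IsFlag.mem_of_convex [AddCommGroup W] [Module ℝ W] {C : Set W} (hC : Convex ℝ C)
    {σ τ : List W} (hτ : IsFlag barycenter σ τ) (hσ : ∀ w ∈ σ, w ∈ C) : ∀ w ∈ τ, w ∈ C := by
  induction hτ with
  | nil => simp
  | cons hsub hlen _ ih =>
    refine List.forall_mem_cons.2 ⟨barycenter_mem hC ?_ hσ, ih fun w hw ↦ hσ w (hsub.subset hw)⟩
    exact List.ne_nil_of_length_eq_add_one hlen.symm

variable [NormedAddCommGroup W] [NormedSpace ℝ W]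

theorem dist_barycenter_le {σ : List W} {D : ℝ} (h : ∀ x ∈ σ, ∀ y ∈ σ, dist x y ≤ D) {v : W}
    (hv : v ∈ σ) : dist v (barycenter σ) ≤ (1 - (σ.length : ℝ)⁻¹) * D := by
  obtain ⟨i₀, rfl⟩ := List.get_of_mem hv
  have hlen : (σ.length : ℝ) ≠ 0 := by
    simpa using List.ne_nil_of_mem hv
  have hsub : σ.get i₀ - barycenter σ = (σ.length : ℝ)⁻¹ • ∑ i, (σ.get i₀ - σ.get i) := by
    rw [barycenter_eq_sum, Finset.sum_sub_distrib, smul_sub, Finset.smul_sum (f := σ.get)]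
    simp [← Nat.cast_smul_eq_nsmul ℝ, smul_smul, hlen]
  have hsum : ∑ i, ‖σ.get i₀ - σ.get i‖ ≤ (σ.length - 1) * D := by
    calc ∑ i, ‖σ.get i₀ - σ.get i‖ = ∑ i ∈ Finset.univ.erase i₀, dist (σ.get i₀) (σ.get i) := by
          simp_rw [← dist_eq_norm]
          exact (Finset.sum_erase _ (by simp)).symm
      _ ≤ (Finset.univ.erase i₀).card • D :=
          Finset.sum_le_card_nsmul _ _ _ fun i _ ↦ h _ (σ.get_mem _) _ (σ.get_mem _)
      _ = (σ.length - 1) * D := by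
          rw [nsmul_eq_mul, Finset.card_erase_of_mem (Finset.mem_univ _), Finset.card_fin,
            Nat.cast_pred (i₀.pos)]
  calc dist (σ.get i₀) (barycenter σ) = (σ.length : ℝ)⁻¹ * ‖∑ i, (σ.get i₀ - σ.get i)‖ := by
        rw [dist_eq_norm, hsub, norm_smul, norm_inv, Real.norm_natCast]
    _ ≤ (σ.length : ℝ)⁻¹ * ((σ.length - 1) * D) := by
        gcongr
        exact (norm_sum_le _ _).trans hsum
    _ = (1 - (σ.length : ℝ)⁻¹) * D := by field_simp

theorem IsFlag.dist_le {n : ℕ} {D : ℝ} {σ τ : List W} (hτ : IsFlag barycenter σ τ)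
    (hn : σ.length ≤ n) (h : ∀ x ∈ σ, ∀ y ∈ σ, dist x y ≤ D) :
    ∀ x ∈ τ, ∀ y ∈ τ, dist x y ≤ (1 - (n : ℝ)⁻¹) * D := by
  induction hτ with
  | nil => simp
  | @cons σ σ' τ hsub hlen hτ ih =>
    obtain ⟨v, hv⟩ := List.exists_mem_of_length_pos (by omega : 0 < σ.length)
    have hD : 0 ≤ D := dist_nonneg.trans (h v hv v hv)
    have hσ : ∀ w ∈ σ, w ∈ Metric.closedBall (barycenter σ) ((1 - (n : ℝ)⁻¹) * D) := fun w hw ↦ by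
      refine (dist_barycenter_le h hw).trans ?_
      have : (0 : ℝ) < σ.length := by exact_mod_cast List.length_pos_of_mem hv
      gcongr
    have hball : ∀ y ∈ τ, dist y (barycenter σ) ≤ (1 - (n : ℝ)⁻¹) * D :=
      hτ.mem_of_convex (convex_closedBall _ _) fun w hw ↦ hσ w (hsub.subset hw)
    have ih := ih (by omega) fun x hx y hy ↦ h x (hsub.subset hx) y (hsub.subset hy)
    intro x hx y hy
    rcases List.mem_cons.1 hx with rfl | hx <;> rcases List.mem_cons.1 hy with rfl | hy
    · rw [dist_self]
      exact dist_nonneg.trans (hσ v hv)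
    · rw [dist_comm]
      exact hball y hy
    · exact hball x hx
    · exact ih x hx y hy

end Barycenter

section Join

/-- The face of the join of copies of the discrete space `Z`, indexed by `L`, spanned by the
vertices `(c l, l)`. The coordinate at `(j, l)` is the mass at the point `j` of the `l`-th copy. -/
def joinFace {Z L : Type*} [Fintype Z] [Fintype L] (c : L → Z) : Set (Z × L → ℝ) :=
  {v ∈ stdSimplex ℝ (Z × L) | ∀ j l, j ≠ c l → v (j, l) = 0}

theorem convex_joinFace {Z L : Type*} [Fintype Z] [Fintype L] (c : L → Z) :
    Convex ℝ (joinFace c) := by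
  rintro v ⟨hv, hvc⟩ w ⟨hw, hwc⟩ a b ha hb hab
  exact ⟨convex_stdSimplex ℝ _ hv hw ha hb hab, fun j l hj ↦ by simp [hvc j l hj, hwc j l hj]⟩

theorem isCompact_joinFace {Z L : Type*} [Fintype Z] [Fintype L] (c : L → Z) :
    IsCompact (joinFace c) := by
  have hclosed : IsClosed {v : Z × L → ℝ | ∀ j l, j ≠ c l → v (j, l) = 0} := by
    simp only [Set.ofPred_forall]
    exact isClosed_iInter fun j ↦ isClosed_iInter fun l ↦ isClosed_iInter fun _ ↦
      isClosed_eq (continuous_apply _) continuous_const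
  exact (isCompact_stdSimplex ℝ (Z × L)).inter_right hclosed

theorem dist_le_one_of_mem_joinFace {Z L : Type*} [Fintype Z] [Fintype L] {c : L → Z}
    {v w : Z × L → ℝ} (hv : v ∈ joinFace c) (hw : w ∈ joinFace c) : dist v w ≤ 1 :=
  (dist_pi_le_iff zero_le_one).2 fun x ↦
    Real.dist_le_of_mem_Icc_01 (mem_Icc_of_mem_stdSimplex hv.1 x) (mem_Icc_of_mem_stdSimplex hw.1 x)

theorem single_mem_joinFace {Z L : Type*} [Fintype Z] [Fintype L] [DecidableEq Z] [DecidableEq L]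
    (c : L → Z) (l : L) : Pi.single (c l, l) 1 ∈ joinFace c := by
  refine ⟨single_mem_stdSimplex ℝ (c l, l), fun j l' hj ↦ Pi.single_eq_of_ne ?_ 1⟩
  rintro ⟨⟩
  exact hj rfl

/-- The generator of the action of `ℤ/p` on the join of copies of `ℤ/p`. -/
def rot (p : ℕ) (L : Type*) : (ZMod p × L → ℝ) →ₗ[ℝ] (ZMod p × L → ℝ) :=
  LinearMap.funLeft ℝ ℝ fun x ↦ (x.1 - 1, x.2)

variable {p : ℕ} {L : Type*}

theorem rot_apply (v : ZMod p × L → ℝ) (j : ZMod p) (l : L) : rot p L v (j, l) = v (j - 1, l) :=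
  rfl

theorem rot_iterate_self : (rot p L)^[p] = id := by
  have h (n : ℕ) (v : ZMod p × L → ℝ) (j : ZMod p) (l : L) :
      (rot p L)^[n] v (j, l) = v (j - n, l) := by
    induction n generalizing j with
    | zero => simp
    | succ n ih => rw [Function.iterate_succ_apply', rot_apply, ih]; push_cast; ring_nf
  ext v ⟨j, l⟩
  simp [h]

variable [Fintype L] [NeZero p]

theorem rot_mem_joinFace {c : L → ZMod p} {v : ZMod p × L → ℝ} (hv : v ∈ joinFace c) :
    rot p L v ∈ joinFace fun l ↦ c l + 1 := by
  refine ⟨⟨fun x ↦ hv.1.1 _, ?_⟩, fun j l hj ↦ hv.2 _ _ fun h ↦ hj (sub_eq_iff_eq_add.1 h)⟩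
  rw [← hv.1.2]
  exact Fintype.sum_equiv ((Equiv.subRight 1).prodCongr (Equiv.refl L)) _ _ fun _ ↦ rfl

variable (p L) in
/-- The ordered simplices contained in a face of the join of copies of `ℤ/p`, of diameter at most
`D`. -/
def joinSimplices (D : ℝ) : Set (List (ZMod p × L → ℝ)) :=
  {σ | (∃ c : L → ZMod p, ∀ v ∈ σ, v ∈ joinFace c) ∧ ∀ v ∈ σ, ∀ w ∈ σ, dist v w ≤ D}

theorem sublist_mem_joinSimplices {D : ℝ} {σ τ : List (ZMod p × L → ℝ)}
    (hσ : σ ∈ joinSimplices p L D) (hτ : τ.Sublist σ) : τ ∈ joinSimplices p L D := by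
  obtain ⟨⟨c, hc⟩, hdist⟩ := hσ
  exact ⟨⟨c, fun v hv ↦ hc v (hτ.subset hv)⟩,
    fun v hv w hw ↦ hdist v (hτ.subset hv) w (hτ.subset hw)⟩

theorem map_rot_mem_joinSimplices {D : ℝ} {σ : List (ZMod p × L → ℝ)}
    (hσ : σ ∈ joinSimplices p L D) : σ.map (rot p L) ∈ joinSimplices p L D := by
  obtain ⟨⟨c, hc⟩, hdist⟩ := hσ
  refine ⟨⟨_, List.forall_mem_map.2 fun v hv ↦ rot_mem_joinFace (hc v hv)⟩, ?_⟩
  simp only [List.forall_mem_map]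
  intro v hv w hw
  have hD : 0 ≤ D := dist_nonneg.trans (hdist v hv w hw)
  exact (dist_pi_le_iff hD).2 fun x ↦ (dist_pi_le_iff hD).1 (hdist v hv w hw) _

theorem IsFlag.mem_joinSimplices {n : ℕ} {D : ℝ} {σ τ : List (ZMod p × L → ℝ)}
    (hτ : IsFlag barycenter σ τ) (hn : σ.length ≤ n) (hσ : σ ∈ joinSimplices p L D) :
    τ ∈ joinSimplices p L ((1 - (n : ℝ)⁻¹) * D) := by
  obtain ⟨⟨c, hc⟩, hdist⟩ := hσ
  exact ⟨⟨c, hτ.mem_of_convex (convex_joinFace c) hc⟩, hτ.dist_le hn hdist⟩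

theorem exists_isTower_rot (p N : ℕ) [NeZero p] :
    ∃ f, IsTower p (rot p (Fin (N + 1))) N f ∧
      ∀ k ≤ N, f k ∈ chainsOn (joinSimplices p (Fin (N + 1)) 1) := by
  let e (k : ℕ) : ZMod p × Fin (N + 1) → ℝ := Pi.single (0, Fin.ofNat (N + 1) k) 1
  have he (k : ℕ) (j : ZMod p) (l : Fin (N + 1)) (hl : k < l) : e k (j, l) = 0 := by
    refine Pi.single_eq_of_ne ?_ 1
    rintro ⟨⟩
    exact (Nat.mod_le k (N + 1)).not_gt hl
  let S (k : ℕ) : Set (List (ZMod p × Fin (N + 1) → ℝ)) :=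
    {σ | ∃ c, ∀ v ∈ σ, v ∈ joinFace c ∧ ∀ j (l : Fin (N + 1)), k < l → v (j, l) = 0}
  refine ⟨coneTower p (rot p _) e, isTower_coneTower rot_iterate_self e N, fun k hk ↦ ?_⟩
  refine Finsupp.supported_mono ?_ (coneTower_mem_chainsOn (S := S) p ?_ ?_ ?_ k hk)
  · rintro σ ⟨c, hc⟩
    exact ⟨⟨c, fun v hv ↦ (hc v hv).1⟩,
      fun v hv w hw ↦ dist_le_one_of_mem_joinFace (hc v hv).1 (hc w hw).1⟩
  · exact ⟨0, by simpa using ⟨single_mem_joinFace 0 _, he 0⟩⟩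
  · rintro k σ ⟨c, hc⟩
    exact ⟨_, List.forall_mem_map.2 fun v hv ↦
      ⟨rot_mem_joinFace (hc v hv).1, fun j l hl ↦ (hc v hv).2 _ l hl⟩⟩
  · rintro k hk σ ⟨c, hc⟩
    let last : Fin (N + 1) := Fin.ofNat (N + 1) (k + 1)
    have hlast : (last : ℕ) = k + 1 := Nat.mod_eq_of_lt (by omega)
    refine ⟨Function.update c last 0, List.forall_mem_cons.2
      ⟨⟨?_, he (k + 1)⟩, fun v hv ↦ ⟨⟨(hc v hv).1.1, fun j l hj ↦ ?_⟩, fun j l hl ↦ ?_⟩⟩⟩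
    · have h := single_mem_joinFace (Function.update c last 0) last
      rwa [Function.update_self] at h
    · rcases eq_or_ne l last with rfl | hl
      · exact (hc v hv).2 j last (by omega)
      · rw [Function.update_of_ne hl] at hj
        exact (hc v hv).1.2 j l hj
    · exact (hc v hv).2 j l (by omega)

theorem exists_isTower_rot_of_pos (p N : ℕ) [NeZero p] {δ : ℝ} (hδ : 0 < δ) :
    ∃ f, IsTower p (rot p (Fin (N + 1))) N f ∧
      ∀ k ≤ N, f k ∈ chainsOn (joinSimplices p (Fin (N + 1)) δ) := by
  have hiter (M : ℕ) : ∃ f, IsTower p (rot p (Fin (N + 1))) N f ∧ ∀ k ≤ N,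
      f k ∈ chainsOn (joinSimplices p (Fin (N + 1)) ((1 - ((N + 1 : ℕ) : ℝ)⁻¹) ^ M)) := by
    induction M with
    | zero => simpa using exists_isTower_rot p N
    | succ M ih =>
      obtain ⟨f, hf, hmem⟩ := ih
      refine ⟨_, hf.subdivide (b := barycenter) (fun _ hσ _ ↦ sublist_mem_joinSimplices hσ)
        (fun _ ↦ map_rot_mem_joinSimplices) hmem (fun _ _ _ ↦ barycenter_map _ _), fun k hk ↦ ?_⟩
      refine subdivide_mem_chainsOn (fun σ hσ hlen τ hτ ↦ ?_) (hf.length_eq k hk) (hmem k hk)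
      rw [pow_succ']
      exact hτ.mem_joinSimplices (by omega) hσ
  have hN : (1 - ((N + 1 : ℕ) : ℝ)⁻¹) < 1 := sub_lt_self 1 (by positivity)
  obtain ⟨M, hM⟩ := exists_pow_lt_of_lt_one hδ hN
  obtain ⟨f, hf, hmem⟩ := hiter M
  refine ⟨f, hf, fun k hk ↦ Finsupp.supported_mono ?_ (hmem k hk)⟩
  exact fun σ hσ ↦ ⟨hσ.1, fun v hv w hw ↦ (hσ.2 v hv w hw).trans hM.le⟩

end Join

section Labels

theorem IsFlag.length_le_of_isChain_ne {X Y : Type*} {b : List X → Y} {S : Set (List X)}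
    (hS : ∀ σ ∈ S, ∀ τ : List X, τ.Sublist σ → τ ∈ S) {ρ : List X → ℕ}
    (hpos : ∀ σ ∈ S, σ ≠ [] → 0 < ρ σ)
    (hlt : ∀ σ ∈ S, ∀ σ' : List X, σ'.Sublist σ → b σ ≠ b σ' → ρ σ' < ρ σ)
    {σ : List X} {τ : List Y} (hτ : IsFlag b σ τ) (hσ : σ ∈ S) (hchain : τ.IsChain (· ≠ ·)) :
    τ.length ≤ ρ σ := by
  induction hτ with
  | nil => simp
  | cons hsub hlen hflag ih =>
    have hle := ih (hS _ hσ _ hsub) hchain.tail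
    cases hflag with
    | nil => exact hpos _ hσ (List.ne_nil_of_length_eq_add_one hlen.symm)
    | cons =>
      exact hle.trans_lt (hlt _ hσ _ hsub (List.isChain_cons_cons.1 hchain).1)

variable {p : ℕ} [Fact p.Prime] {ι : Type*}

/-- The average of a set of residues, with the junk value `0` when its size is divisible by `p`. -/
def mean (A : Finset (ZMod p)) : ZMod p := (∑ a ∈ A, a) / (A.card : ZMod p)

theorem card_lt_of_ne_univ {A : Finset (ZMod p)} (h : A ≠ Finset.univ) : A.card < p := by
  simpa [ZMod.card] using Finset.card_lt_card (Finset.ssubset_univ_iff.2 h)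

theorem mean_image_add_one {A : Finset (ZMod p)} (hne : A.Nonempty) (huniv : A ≠ Finset.univ) :
    mean (A.image (· + 1)) = mean A + 1 := by
  have hcard : (A.card : ZMod p) ≠ 0 := fun h ↦
    Nat.not_dvd_of_pos_of_lt hne.card_pos (card_lt_of_ne_univ huniv)
      ((ZMod.natCast_eq_zero_iff _ _).1 h)
  have hinj : Function.Injective (· + 1 : ZMod p → ZMod p) := add_left_injective 1
  rw [mean, mean, Finset.card_image_of_injective _ hinj, Finset.sum_image hinj.injOn,
    Finset.sum_add_distrib, div_add_one hcard]
  simp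

open Classical in
/-- The mean of a chosen nonempty member of a family of sets of residues, where the choice depends
only on which members are nonempty. If all members are empty, the value is `0`. -/
noncomputable def label (A : ι → Finset (ZMod p)) : ZMod p :=
  if h : ∃ i, (A i).Nonempty then mean (A h.choose) else 0

theorem label_image_add_one {A : ι → Finset (ZMod p)} (hne : ∃ i, (A i).Nonempty)
    (huniv : ∀ i, A i ≠ Finset.univ) : label (fun i ↦ (A i).image (· + 1)) = label A + 1 := by
  have hne' : ∃ i, ((A i).image (· + 1)).Nonempty := by simpa only [Finset.image_nonempty] using hne
  have hchoose : hne'.choose = hne.choose := by simp only [Finset.image_nonempty]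
  rw [label, label, dif_pos hne', dif_pos hne, hchoose]
  exact mean_image_add_one hne.choose_spec (huniv _)

/-- A `ℤ/p`-analogue of Tucker's lemma.
Along a flag whose labels change at every step, the total size of `A` grows at every step. -/
theorem IsTower.exists_forall_eq_empty_or_exists_eq_univ [Fintype ι] {X : Type*} {g : X → X} {N : ℕ}
    {f : ℕ → OrderedChain X} (hf : IsTower p g N f) (hN : (p - 1) * Fintype.card ι ≤ N)
    {S : Set (List X)} (hS : ∀ σ ∈ S, ∀ τ : List X, τ.Sublist σ → τ ∈ S)
    (hSg : ∀ σ ∈ S, σ.map g ∈ S) (hfS : ∀ k ≤ N, f k ∈ chainsOn S)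
    {A : List X → ι → Finset (ZMod p)} (hmono : ∀ σ τ : List X, τ.Sublist σ → A τ ≤ A σ)
    (hequiv : ∀ σ ∈ S, A (σ.map g) = fun i ↦ (A σ i).image (· + 1)) :
    ∃ σ ∈ S, σ ≠ [] ∧ ((∀ i, A σ i = ∅) ∨ ∃ i, A σ i = Finset.univ) := by
  by_contra! hcon
  have hne (σ : List X) (hσ : σ ∈ S) (hnil : σ ≠ []) : ∃ i, (A σ i).Nonempty :=
    (hcon σ hσ hnil).1
  have huniv (σ : List X) (hσ : σ ∈ S) (hnil : σ ≠ []) : ∀ i, A σ i ≠ Finset.univ :=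
    (hcon σ hσ hnil).2
  have hlabels : IsTower p (· + 1) N fun k ↦
      NecklaceSplitting.subdivide (fun σ ↦ label (A σ)) (k + 1) (f k) :=
    hf.subdivide hS hSg hfS fun σ hσ hnil ↦ by
      rw [hequiv σ hσ, label_image_add_one (hne σ hσ hnil) (huniv σ hσ hnil)]
  obtain ⟨τ, hτ, hchain⟩ := hlabels.exists_isChain_ne (Fact.out : p.Prime).one_lt
  have hlen : τ.length = N + 1 := (Finsupp.mem_supported ℤ _).1 (hlabels.length_eq N le_rfl) hτ
  have hbound : NecklaceSplitting.subdivide (fun σ ↦ label (A σ)) (N + 1) (f N) ∈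
      chainsOn {τ | τ.IsChain (· ≠ ·) → τ.length ≤ (p - 1) * Fintype.card ι} := by
    refine subdivide_mem_chainsOn (fun σ hσ hσN τ hτ hchain ↦ ?_) (hf.length_eq N le_rfl)
      (hfS N le_rfl)
    calc τ.length ≤ ∑ i, (A σ i).card :=
          hτ.length_le_of_isChain_ne hS (ρ := fun σ ↦ ∑ i, (A σ i).card) ?_ ?_ hσ hchain
      _ ≤ ∑ _ : ι, (p - 1) := Finset.sum_le_sum fun i _ ↦ Nat.le_sub_one_of_lt <|
          card_lt_of_ne_univ (huniv σ hσ (List.ne_nil_of_length_eq_add_one hσN) i)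
      _ = (p - 1) * Fintype.card ι := by simp [mul_comm]
    · intro σ hσ hnil
      obtain ⟨i, hi⟩ := hne σ hσ hnil
      exact Finset.sum_pos' (fun _ _ ↦ Nat.zero_le _) ⟨i, Finset.mem_univ i, hi.card_pos⟩
    · intro σ _ σ' hsub hlabel
      have hlt : A σ' < A σ := (hmono σ σ' hsub).lt_of_ne fun h ↦ hlabel (by rw [h])
      obtain ⟨hle, i, hi⟩ := Pi.lt_def.1 hlt
      exact Finset.sum_lt_sum (fun i _ ↦ Finset.card_le_card (hle i))
        ⟨i, Finset.mem_univ i, Finset.card_lt_card hi⟩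
  have := (Finsupp.mem_supported ℤ _).1 hbound hτ hchain
  omega

end Labels

section Zeros

theorem exists_pos_forall_exists_le_of_isCompact {X α : Type*} [TopologicalSpace X] {K : Set X}
    (hK : IsCompact K) {h : α → X → ℝ} (hcont : ∀ a, ContinuousOn (h a) K)
    (hpos : ∀ v ∈ K, ∃ a, 0 < h a v) : ∃ ε > 0, ∀ v ∈ K, ∃ a, ε ≤ h a v := by
  refine hK.induction_on (p := fun s ↦ ∃ ε > 0, ∀ v ∈ s, ∃ a, ε ≤ h a v)
    ⟨1, one_pos, by simp⟩ ?_ ?_ ?_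
  · rintro s t hst ⟨ε, hε, ht⟩
    exact ⟨ε, hε, fun v hv ↦ ht v (hst hv)⟩
  · rintro s t ⟨ε, hε, hs⟩ ⟨ε', hε', ht⟩
    refine ⟨min ε ε', lt_min hε hε', ?_⟩
    rintro v (hv | hv)
    · exact (hs v hv).imp fun _ h ↦ (min_le_left _ _).trans h
    · exact (ht v hv).imp fun _ h ↦ (min_le_right _ _).trans h
  · intro x hx
    obtain ⟨a, ha⟩ := hpos x hx
    refine ⟨_, (hcont a x hx).eventually_const_lt (half_lt_self ha), h a x / 2, half_pos ha, ?_⟩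
    exact fun v hv ↦ ⟨a, le_of_lt hv⟩

variable {p N : ℕ} [Fact p.Prime] {ι : Type*}

open Classical in
/-- The residues `j` for which the `(j, i)` coordinate of `G` is at least `ε` at some vertex. -/
noncomputable def largeResidues {X : Type*} (G : X → ZMod p → ι → ℝ) (ε : ℝ) (σ : List X) (i : ι) :
    Finset (ZMod p) :=
  {j | ∃ v ∈ σ, ε ≤ G v j i}

section LargeResidues

variable {X : Type*} {G : X → ZMod p → ι → ℝ} {ε : ℝ} {σ : List X} {i : ι} {j : ZMod p}

theorem mem_largeResidues : j ∈ largeResidues G ε σ i ↔ ∃ v ∈ σ, ε ≤ G v j i := by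
  simp [largeResidues]

theorem largeResidues_mono {τ : List X} (h : τ.Sublist σ) :
    largeResidues G ε τ ≤ largeResidues G ε σ := fun i j hj ↦ by
  obtain ⟨v, hv, hle⟩ := mem_largeResidues.1 hj
  exact mem_largeResidues.2 ⟨v, h.subset hv, hle⟩

theorem largeResidues_map {g : X → X} (hg : ∀ v ∈ σ, ∀ j, G (g v) (j + 1) i = G v j i) :
    largeResidues G ε (σ.map g) i = (largeResidues G ε σ i).image (· + 1) := by
  ext j
  simp only [mem_largeResidues, List.mem_map, Finset.mem_image]
  constructor
  · rintro ⟨_, ⟨v, hv, rfl⟩, hle⟩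
    exact ⟨j - 1, ⟨v, hv, by rwa [← hg v hv, sub_add_cancel]⟩, sub_add_cancel j 1⟩
  · rintro ⟨j, ⟨v, hv, hle⟩, rfl⟩
    exact ⟨_, ⟨v, hv, rfl⟩, by rwa [hg v hv]⟩

theorem largeResidues_ne_univ [Fintype ι] (hσ : σ ≠ []) (hsum : ∀ v ∈ σ, ∑ j, G v j i = 0)
    (hclose : ∀ v ∈ σ, ∀ w ∈ σ, dist (G v) (G w) < ε) : largeResidues G ε σ i ≠ Finset.univ := by
  intro huniv
  obtain ⟨v, hv⟩ := List.exists_mem_of_ne_nil σ hσ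
  refine (Finset.sum_pos (fun j _ ↦ ?_) Finset.univ_nonempty).ne' (hsum v hv)
  obtain ⟨w, hw, hle⟩ := mem_largeResidues.1 (huniv ▸ Finset.mem_univ j)
  have hdist : dist (G v j i) (G w j i) < ε :=
    ((dist_le_pi_dist _ _ i).trans (dist_le_pi_dist _ _ j)).trans_lt (hclose v hv w hw)
  linarith [(abs_lt.1 hdist).1]

end LargeResidues

theorem exists_pos_le_of_sum_eq_zero {X : Type*} [TopologicalSpace X] {K : Set X}
    (hK : IsCompact K) {G : X → ZMod p → ι → ℝ} (hcont : ContinuousOn G K)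
    (hsum : ∀ v ∈ K, ∀ i, ∑ j, G v j i = 0) (hne : ∀ v ∈ K, G v ≠ 0) :
    ∃ ε > 0, ∀ v ∈ K, ∃ a : ZMod p × ι, ε ≤ G v a.1 a.2 := by
  refine exists_pos_forall_exists_le_of_isCompact hK
    (h := fun (a : ZMod p × ι) v ↦ G v a.1 a.2)
    (fun a ↦ continuousOn_pi.1 (continuousOn_pi.1 hcont a.1) a.2) fun v hv ↦ ?_
  by_contra! hnonpos
  refine hne v hv (funext₂ fun j i ↦ ?_)
  exact (Finset.sum_eq_zero_iff_of_nonpos fun j _ ↦ hnonpos (j, i)).1 (hsum v hv i) j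
    (Finset.mem_univ j)

theorem exists_mem_joinFace_eq_zero [Fintype ι] (hN : (p - 1) * Fintype.card ι ≤ N)
    {G : (ZMod p × Fin (N + 1) → ℝ) → ZMod p → ι → ℝ}
    (hcont : ContinuousOn G (⋃ c : Fin (N + 1) → ZMod p, joinFace c))
    (hrot : ∀ c : Fin (N + 1) → ZMod p, ∀ v ∈ joinFace c, ∀ j i, G (rot p _ v) (j + 1) i = G v j i)
    (hsum : ∀ c : Fin (N + 1) → ZMod p, ∀ v ∈ joinFace c, ∀ i, ∑ j, G v j i = 0) :
    ∃ c : Fin (N + 1) → ZMod p, ∃ v ∈ joinFace c, G v = 0 := by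
  by_contra! hcon
  have hcompact : IsCompact (⋃ c : Fin (N + 1) → ZMod p, joinFace c) :=
    isCompact_iUnion isCompact_joinFace
  obtain ⟨ε, hε, hlarge⟩ := exists_pos_le_of_sum_eq_zero hcompact hcont
    (fun v hv ↦ by obtain ⟨c, hc⟩ := Set.mem_iUnion.1 hv; exact hsum c v hc)
    (fun v hv ↦ by obtain ⟨c, hc⟩ := Set.mem_iUnion.1 hv; exact hcon c v hc)
  obtain ⟨δ, hδ, hclose⟩ :=
    Metric.uniformContinuousOn_iff.1 (hcompact.uniformContinuousOn_of_continuous hcont) ε hε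
  obtain ⟨f, hf, hmem⟩ := exists_isTower_rot_of_pos p N (half_pos hδ)
  have hequiv (σ) (hσ : σ ∈ joinSimplices p (Fin (N + 1)) (δ / 2)) :
      largeResidues G ε (σ.map (rot p _)) = fun i ↦ (largeResidues G ε σ i).image (· + 1) := by
    obtain ⟨⟨c, hc⟩, -⟩ := hσ
    exact funext fun i ↦ largeResidues_map fun v hv j ↦ hrot c v (hc v hv) j i
  obtain ⟨σ, ⟨⟨c, hc⟩, hdist⟩, hnil, hempty | ⟨i, huniv⟩⟩ :=
    hf.exists_forall_eq_empty_or_exists_eq_univ hN (fun _ hσ _ ↦ sublist_mem_joinSimplices hσ)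
      (fun _ ↦ map_rot_mem_joinSimplices) hmem (fun _ _ ↦ largeResidues_mono) hequiv
  · obtain ⟨v, hv⟩ := List.exists_mem_of_ne_nil σ hnil
    obtain ⟨⟨j, i⟩, hji⟩ := hlarge v (Set.mem_iUnion.2 ⟨c, hc v hv⟩)
    exact Finset.notMem_empty j (hempty i ▸ mem_largeResidues.2 ⟨v, hv, hji⟩)
  · refine largeResidues_ne_univ hnil (fun v hv ↦ hsum c v (hc v hv) i) (fun v hv w hw ↦ ?_) huniv
    exact hclose v (Set.mem_iUnion.2 ⟨c, hc v hv⟩) w (Set.mem_iUnion.2 ⟨c, hc w hw⟩)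
      ((hdist v hv w hw).trans_lt (half_lt_self hδ))

end Zeros

section FairDivision

theorem sum_succ_sub_castSucc {n : ℕ} {G : Type*} [AddCommGroup G] (f : Fin (n + 1) → G) :
    ∑ l : Fin n, (f l.succ - f l.castSucc) = f (Fin.last n) - f 0 := by
  rw [Finset.sum_sub_distrib, sub_eq_sub_iff_add_eq_add, add_comm, ← Fin.sum_univ_succ,
    Fin.sum_univ_castSucc, add_comm]

/-- The cut points `0 = T 0 ≤ ⋯ ≤ T n = 1` encoded by a point of the join, whose `l`-th copy
carries the length of the `l`-th piece. -/
def cutPoints {Z : Type*} [Fintype Z] {n : ℕ} (v : Z × Fin n → ℝ) : Fin (n + 1) → ℝ :=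
  Fin.partialSum fun l ↦ ∑ j, v (j, l)

section

variable {Z : Type*} [Fintype Z] {n : ℕ} {c : Fin n → Z} {v : Z × Fin n → ℝ}

theorem cutPoints_zero (v : Z × Fin n → ℝ) : cutPoints v 0 = 0 :=
  Fin.partialSum_zero _

theorem cutPoints_succ (v : Z × Fin n → ℝ) (l : Fin n) :
    cutPoints v l.succ = cutPoints v l.castSucc + ∑ j, v (j, l) :=
  Fin.partialSum_succ _ l

theorem cutPoints_last (hv : v ∈ joinFace c) : cutPoints v (Fin.last n) = 1 := by
  have h := sum_succ_sub_castSucc (cutPoints v)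
  simp only [cutPoints_succ, add_sub_cancel_left, cutPoints_zero, sub_zero] at h
  rw [← h, ← hv.1.2, Fintype.sum_prod_type_right]

theorem monotone_cutPoints (hv : v ∈ joinFace c) : Monotone (cutPoints v) :=
  Fin.monotone_iff_le_succ.2 fun l ↦ by
    rw [cutPoints_succ]
    exact le_add_of_nonneg_right (Finset.sum_nonneg fun j _ ↦ hv.1.1 (j, l))

theorem continuous_cutPoints (k : Fin (n + 1)) :
    Continuous fun v : Z × Fin n → ℝ ↦ cutPoints v k := by
  induction k using Fin.induction with
  | zero => simpa only [cutPoints_zero] using continuous_const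
  | succ l ih =>
    simp only [cutPoints_succ]
    fun_prop

theorem cutPoints_rot {p : ℕ} [NeZero p] (v : ZMod p × Fin n → ℝ) :
    cutPoints (rot p _ v) = cutPoints v := by
  refine congrArg Fin.partialSum (funext fun l ↦ ?_)
  exact Fintype.sum_equiv (Equiv.subRight (1 : ZMod p)) _ _ fun _ ↦ rfl

theorem apply_cutPoints_add_sub [DecidableEq Z] (hv : v ∈ joinFace c) (f : ℝ → ℝ) (j : Z)
    (l : Fin n) :
    f (cutPoints v l.castSucc + v (j, l)) - f (cutPoints v l.castSucc) =
      if c l = j then f (cutPoints v l.succ) - f (cutPoints v l.castSucc) else 0 := by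
  split_ifs with hj
  · rw [cutPoints_succ, Fintype.sum_eq_single (c l) fun j ↦ hv.2 j l, hj]
  · rw [hv.2 j l (Ne.symm hj), add_zero, sub_self]

end

/-- The excess over the fair share of the total `f`-increment of the pieces of colour `j`, in the
partition of `[0, 1]` encoded by a point of the join. Written so that it is defined and continuous
on the whole ambient space. -/
noncomputable def excess {p n : ℕ} [NeZero p] (f : ℝ → ℝ) (v : ZMod p × Fin n → ℝ) (j : ZMod p) :
    ℝ :=
  ∑ l, (f (cutPoints v l.castSucc + v (j, l)) - f (cutPoints v l.castSucc)) - (f 1 - f 0) / p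

variable {p n : ℕ} [NeZero p] {f : ℝ → ℝ} {c : Fin n → ZMod p} {v : ZMod p × Fin n → ℝ}

theorem continuous_excess (hf : Continuous f) (j : ZMod p) :
    Continuous fun v : ZMod p × Fin n → ℝ ↦ excess f v j := by
  refine (continuous_finsetSum _ fun l _ ↦ Continuous.sub ?_ ?_).sub continuous_const
  · exact hf.comp ((continuous_cutPoints _).add (continuous_apply _))
  · exact hf.comp (continuous_cutPoints _)

theorem excess_rot (f : ℝ → ℝ) (v : ZMod p × Fin n → ℝ) (j : ZMod p) :
    excess f (rot p _ v) (j + 1) = excess f v j := by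
  simp only [excess, cutPoints_rot, rot_apply, add_sub_cancel_right]

theorem excess_eq (hv : v ∈ joinFace c) (j : ZMod p) :
    excess f v j = ∑ l with c l = j, (f (cutPoints v l.succ) - f (cutPoints v l.castSucc)) -
      (f 1 - f 0) / p := by
  simp only [excess, apply_cutPoints_add_sub hv, Finset.sum_filter]

theorem sum_excess (hv : v ∈ joinFace c) : ∑ j, excess f v j = 0 := by
  simp only [excess_eq hv, Finset.sum_sub_distrib _ fun _ ↦ (f 1 - f 0) / p, Finset.sum_fiberwise]
  rw [sum_succ_sub_castSucc fun k ↦ f (cutPoints v k), cutPoints_last hv, cutPoints_zero,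
    Finset.sum_const, Finset.card_univ, ZMod.card, nsmul_eq_mul,
    mul_div_cancel₀ _ (NeZero.ne (p : ℝ)), sub_self]

theorem exists_fair_partition_of_continuous {p N : ℕ} [Fact p.Prime] {ι : Type*} [Fintype ι]
    (hN : (p - 1) * Fintype.card ι ≤ N) {F : ι → ℝ → ℝ} (hF : ∀ i, Continuous (F i)) :
    ∃ (T : Fin (N + 2) → ℝ) (c : Fin (N + 1) → ZMod p), Monotone T ∧ T 0 = 0 ∧
      T (Fin.last (N + 1)) = 1 ∧
      ∀ i j, ∑ l with c l = j, (F i (T l.succ) - F i (T l.castSucc)) = (F i 1 - F i 0) / p := by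
  obtain ⟨c, v, hv, hzero⟩ := exists_mem_joinFace_eq_zero hN (G := fun v j i ↦ excess (F i) v j)
    (continuous_pi fun j ↦ continuous_pi fun i ↦ continuous_excess (hF i) j).continuousOn
    (fun _ v _ j i ↦ excess_rot (F i) v j) (fun _ v hv i ↦ sum_excess hv)
  refine ⟨cutPoints v, c, monotone_cutPoints hv, cutPoints_zero v, cutPoints_last hv,
    fun i j ↦ sub_eq_zero.1 ?_⟩
  rw [← excess_eq hv]
  exact congrFun (congrFun hzero j) i

end FairDivision

section Cuts

/-- A colouring of the line that only changes colour at the points of the finite set `S`. -/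
def ConstantOffCuts {C : Type*} (S : Finset ℝ) (χ : ℝ → C) : Prop :=
  ∀ ⦃x y⦄, x ≤ y → Disjoint (S : Set ℝ) (Set.Icc x y) → χ x = χ y

section

variable {C D : Type*} {S T : Finset ℝ} {χ : ℝ → C}

theorem ConstantOffCuts.comp (hχ : ConstantOffCuts S χ) (g : C → D) :
    ConstantOffCuts S (g ∘ χ) :=
  fun _ _ hxy hS ↦ congrArg g (hχ hxy hS)

theorem ConstantOffCuts.mono (hχ : ConstantOffCuts S χ) (hST : S ⊆ T) : ConstantOffCuts T χ :=
  fun _ _ hxy hT ↦ hχ hxy (hT.mono_left hST)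

theorem ConstantOffCuts.comp_strictMono (hχ : ConstantOffCuts S χ) {θ : ℝ → ℝ}
    (hθ : StrictMono θ) (hcont : Continuous θ) :
    ConstantOffCuts (S.preimage θ hθ.injective.injOn) (χ ∘ θ) := by
  intro x y hxy hS
  refine hχ (hθ.monotone hxy) (Set.disjoint_left.2 fun s hs hsθ ↦ ?_)
  obtain ⟨z, hz, rfl⟩ := intermediate_value_Icc hxy hcont.continuousOn hsθ
  exact Set.disjoint_left.1 hS (Finset.mem_preimage.2 hs) hz

theorem ConstantOffCuts.prod_dependent [Fintype C] (hχ : ConstantOffCuts S χ) {S' : C → Finset ℝ}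
    {χ' : C → ℝ → D} (hχ' : ∀ j, ConstantOffCuts (S' j) (χ' j)) :
    ConstantOffCuts (S ∪ Finset.univ.biUnion S') fun x ↦ (χ x, χ' (χ x) x) := by
  intro x y hxy hdisj
  have hS' : S' (χ x) ⊆ S ∪ Finset.univ.biUnion S' :=
    (Finset.subset_biUnion_of_mem S' (Finset.mem_univ _)).trans Finset.subset_union_right
  have hχ_eq : χ x = χ y := hχ.mono Finset.subset_union_left hxy hdisj
  have hχ'_eq : χ' (χ x) x = χ' (χ x) y := (hχ' (χ x)).mono hS' hxy hdisj
  simp only [hχ'_eq]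
  rw [hχ_eq]

theorem ConstantOffCuts.measurableSet_preimage (hχ : ConstantOffCuts S χ) (A : Set C) :
    MeasurableSet (χ ⁻¹' A) := by
  have hopen : IsOpen (χ ⁻¹' A \ S) := by
    rw [Metric.isOpen_iff]
    rintro x ⟨hx, hxS⟩
    obtain ⟨ε, hε, hball⟩ := Metric.isOpen_iff.1 S.finite_toSet.isClosed.isOpen_compl x hxS
    refine ⟨ε, hε, fun y hy ↦ ⟨?_, hball hy⟩⟩
    have hdisj : Disjoint (S : Set ℝ) (Set.uIcc x y) := Set.disjoint_right.2 fun z hz ↦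
      hball ((convex_ball x ε).ordConnected.uIcc_subset (Metric.mem_ball_self hε) hy hz)
    have hxy : χ y = χ x := by
      rcases le_total x y with h | h
      · exact (hχ h (Set.uIcc_of_le h ▸ hdisj)).symm
      · exact hχ h (Set.uIcc_of_ge h ▸ hdisj)
    rwa [Set.mem_preimage, hxy]
  rw [← Set.sdiff_union_inter (χ ⁻¹' A) S]
  exact hopen.measurableSet.union (S.finite_toSet.inter_of_right _).measurableSet

end

/-- The index of the piece containing `x` in the partition of the line by the cuts `t`; a cut
belongs to the piece on its left. -/
noncomputable def cutIndex {n : ℕ} (t : Fin n → ℝ) (x : ℝ) : Fin (n + 1) :=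
  ⟨Finset.card {l | t l < x}, Nat.lt_succ_of_le (card_finset_fin_le _)⟩

variable {n : ℕ} {t : Fin n → ℝ} {x : ℝ}

theorem constantOffCuts_cutIndex (t : Fin n → ℝ) :
    ConstantOffCuts (Finset.univ.image t) (cutIndex t) := by
  intro x y hxy hdisj
  have h (l : Fin n) : t l < x ↔ t l < y :=
    ⟨fun hl ↦ hl.trans_le hxy, fun hl ↦ lt_of_not_ge fun hx ↦
      Set.disjoint_left.1 hdisj (Finset.mem_coe.2 (Finset.mem_image_of_mem t (Finset.mem_univ l)))
        ⟨hx, hl.le⟩⟩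
  simp only [cutIndex, h]

theorem lt_cutIndex_iff (ht : Monotone t) (l : Fin n) : (l : ℕ) < cutIndex t x ↔ t l < x := by
  constructor
  · contrapose!
    intro hx
    have hsub : ({l' | t l' < x} : Finset (Fin n)) ⊆ Finset.Iio l := fun l' hl' ↦
      Finset.mem_Iio.2 (ht.reflect_lt ((Finset.mem_filter_univ l' |>.1 hl').trans_le hx))
    simpa [cutIndex] using Finset.card_le_card hsub
  · intro hx
    have hsub : Finset.Iic l ⊆ ({l' | t l' < x} : Finset (Fin n)) := fun l' hl' ↦
      Finset.mem_filter_univ l' |>.2 ((ht (Finset.mem_Iic.1 hl')).trans_lt hx)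
    simpa [cutIndex] using Finset.card_le_card hsub

theorem cutIndex_eq_iff (ht : Monotone t) {k : Fin (n + 1)} :
    cutIndex t x = k ↔
      (∀ l : Fin n, (l : ℕ) < k → t l < x) ∧ ∀ l : Fin n, (k : ℕ) ≤ l → x ≤ t l := by
  constructor
  · rintro rfl
    exact ⟨fun l ↦ (lt_cutIndex_iff ht l).1, fun l hl ↦
      not_lt.1 fun hlt ↦ hl.not_gt ((lt_cutIndex_iff ht l).2 hlt)⟩
  · rintro ⟨hlt, hle⟩
    refine Fin.ext (le_antisymm (not_lt.1 fun hk ↦ ?_) (not_lt.1 fun hk ↦ ?_))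
    · have hkn : (k : ℕ) < n := by omega
      exact ((lt_cutIndex_iff ht ⟨k, hkn⟩).1 hk).not_ge (hle _ le_rfl)
    · have hkn : (cutIndex t x : ℕ) < n := by omega
      exact ((lt_cutIndex_iff ht ⟨_, hkn⟩).2 (hlt _ hk)).false

theorem cutIndex_eq_iff_mem_Ioc {T : Fin (n + 2) → ℝ} (hT : Monotone T)
    (hx : x ∈ Set.Ioc (T 0) (T (Fin.last (n + 1)))) {k : Fin (n + 1)} :
    cutIndex (fun l : Fin n ↦ T l.succ.castSucc) x = k ↔
      x ∈ Set.Ioc (T k.castSucc) (T k.succ) := by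
  have hmono : Monotone fun l : Fin n ↦ T l.succ.castSucc := fun l l' h ↦ hT (by simpa using h)
  rw [cutIndex_eq_iff hmono, Set.mem_Ioc]
  refine and_congr ⟨fun h ↦ ?_, fun h l hl ↦ (hT ?_).trans_lt h⟩
    ⟨fun h ↦ ?_, fun h l hl ↦ h.trans (hT ?_)⟩
  · cases k using Fin.cases with
    | zero => exact hx.1
    | succ l => exact h l (by simp)
  · simpa [Fin.le_def, Nat.succ_le_iff] using hl
  · cases k using Fin.lastCases with
    | last => exact hx.2
    | cast l => exact h l (by simp)
  · simpa [Fin.le_def] using hl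

theorem ConstantOffCuts.exists_comp_cutIndex {C : Type*} [Nonempty C] {χ : ℝ → C}
    (hχ : ConstantOffCuts (Finset.univ.image t) χ) (ht : Monotone t) :
    ∃ c : Fin (n + 1) → C, ∀ x ∉ Set.range t, c (cutIndex t x) = χ x := by
  let piece : ↥(Set.range t)ᶜ → Fin (n + 1) := fun x ↦ cutIndex t x
  have hconst {x y : ↥(Set.range t)ᶜ} (hxy : (x : ℝ) ≤ y) (h : piece x = piece y) :
      χ x = χ y := by
    refine hχ hxy (Set.disjoint_left.2 fun s hs hmem ↦ ?_)
    obtain ⟨l, -, rfl⟩ := Finset.mem_image.1 (Finset.mem_coe.1 hs)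
    have hly : t l < y := hmem.2.lt_of_ne fun he ↦ y.2 ⟨l, he⟩
    have hlx : (l : ℕ) < piece x := h ▸ (lt_cutIndex_iff ht l).2 hly
    exact ((lt_cutIndex_iff ht l).1 hlx).not_ge hmem.1
  have hfactors : Function.FactorsThrough (fun x : ↥(Set.range t)ᶜ ↦ χ x) piece := fun x y h ↦
    (le_total (x : ℝ) y).elim (hconst · h) fun hyx ↦ (hconst hyx h.symm).symm
  exact ⟨Function.extend piece (fun x ↦ χ x) fun _ ↦ Classical.arbitrary C,
    fun x hx ↦ hfactors.extend_apply _ ⟨x, hx⟩⟩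

/-- The `k`-th of the closed intervals into which the cuts `t` partition the line. -/
def cutInterval (t : Fin n → ℝ) (k : Fin (n + 1)) : Set ℝ :=
  {x | (∀ l : Fin n, (l : ℕ) < k → t l ≤ x) ∧ ∀ l : Fin n, (k : ℕ) ≤ l → x ≤ t l}

theorem mem_cutInterval_iff (ht : Monotone t) (hx : x ∉ Set.range t) {k : Fin (n + 1)} :
    x ∈ cutInterval t k ↔ cutIndex t x = k := by
  rw [cutIndex_eq_iff ht]
  refine and_congr_left' (forall₂_congr fun l _ ↦ ⟨fun h ↦ h.lt_of_ne ?_, le_of_lt⟩)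
  exact fun he ↦ hx ⟨l, he⟩

theorem measure_iUnion_cutInterval {C : Type*} {ν : Measure ℝ} [NullSingletonClass ν]
    (ht : Monotone t) {χ : ℝ → C} {c : Fin (n + 1) → C}
    (hc : ∀ x ∉ Set.range t, c (cutIndex t x) = χ x) (j : C) :
    ν (⋃ k, ⋃ (_ : c k = j), cutInterval t k) = ν (χ ⁻¹' {j}) := by
  have hrange : ∀ᵐ x ∂ν, x ∉ Set.range t :=
    measure_eq_zero_iff_ae_notMem.1 ((Set.finite_range t).measure_zero ν)
  refine measure_congr (Filter.eventuallyEq_set.2 (hrange.mono fun x hx ↦ ?_))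
  simp [← hc x hx, mem_cutInterval_iff ht hx]

end Cuts

section Splitting

theorem continuous_measureReal_Iic (ν : Measure ℝ) [IsFiniteMeasure ν] [NullSingletonClass ν] :
    Continuous fun x ↦ ν.real (Set.Iic x) := by
  refine continuous_iff_continuousAt.2 fun a ↦
    (ENNReal.tendsto_toReal (measure_ne_top ν _)).comp ?_
  refine tendsto_measure_of_ae_tendsto_indicator_of_isFiniteMeasure _ measurableSet_Iic
    (fun _ ↦ measurableSet_Iic) ?_
  filter_upwards [measure_eq_zero_iff_ae_notMem.1 (measure_singleton (μ := ν) a)] with x hx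
  rcases lt_or_gt_of_ne hx with hlt | hgt
  · filter_upwards [lt_mem_nhds hlt] with b hb
    exact iff_of_true hb.le hlt.le
  · filter_upwards [gt_mem_nhds hgt] with b hb
    exact iff_of_false hb.not_ge hgt.not_ge

theorem measureReal_preimage_cutIndex {n : ℕ} {T : Fin (n + 2) → ℝ} (hT : Monotone T)
    {ν : Measure ℝ} [IsFiniteMeasure ν] (hν : ∀ᵐ x ∂ν, x ∈ Set.Ioc (T 0) (T (Fin.last (n + 1))))
    (k : Fin (n + 1)) :
    ν.real (cutIndex (fun l : Fin n ↦ T l.succ.castSucc) ⁻¹' {k}) =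
      ν.real (Set.Iic (T k.succ)) - ν.real (Set.Iic (T k.castSucc)) := by
  rw [← measureReal_sdiff (Set.Iic_subset_Iic.2 (hT k.castSucc_lt_succ.le)) measurableSet_Iic,
    Set.Iic_sdiff_Iic]
  exact measureReal_congr (Filter.eventuallyEq_set.2 (hν.mono fun x hx ↦
    cutIndex_eq_iff_mem_Ioc hT hx))

/-- Any finite atomless measures `μ i` on the line have a fair colouring by the colours `C`, with
at most `(|C| - 1) |ι|` cuts. -/
def FairlySplittable (ι C : Type*) [Fintype ι] [Fintype C] : Prop :=
  ∀ μ : ι → Measure ℝ, (∀ i, IsFiniteMeasure (μ i)) → (∀ i, NullSingletonClass (μ i)) →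
    ∃ (S : Finset ℝ) (χ : ℝ → C), S.card ≤ (Fintype.card C - 1) * Fintype.card ι ∧
      ConstantOffCuts S χ ∧ ∀ i j, μ i (χ ⁻¹' {j}) = μ i Set.univ / Fintype.card C

variable {ι C D : Type*} [Fintype ι] [Fintype C] [Fintype D]

theorem FairlySplittable.congr (h : FairlySplittable ι C) (e : C ≃ D) : FairlySplittable ι D := by
  intro μ hfin hatom
  obtain ⟨S, χ, hcard, hχ, hfair⟩ := h μ hfin hatom
  rw [Fintype.card_congr e] at hcard hfair
  refine ⟨S, e ∘ χ, hcard, hχ.comp e, fun i j ↦ ?_⟩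
  rw [Set.preimage_comp, ← Equiv.image_symm_eq_preimage, Set.image_singleton, hfair]

theorem fairlySplittable_unique [Unique C] : FairlySplittable ι C := fun μ _ _ ↦
  ⟨∅, default, by simp, fun _ _ _ _ ↦ rfl, fun i j ↦ by
    simp [Unique.eq_default j, Set.preimage_const_of_mem, Pi.default_def]⟩

theorem FairlySplittable.prod (hC : FairlySplittable ι C) (hD : FairlySplittable ι D) :
    FairlySplittable ι (C × D) := by
  classical
  intro μ hfin hatom
  obtain ⟨S, χ, hcard, hχ, hfair⟩ := hC μ hfin hatom
  choose S' χ' hcard' hχ' hfair' using fun j : C ↦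
    hD (fun i ↦ (μ i).restrict (χ ⁻¹' {j})) (fun _ ↦ inferInstance) fun _ ↦ inferInstance
  refine ⟨_, _, ?_, hχ.prod_dependent hχ', fun i ⟨j, k⟩ ↦ ?_⟩
  · have hC_pos : 0 < Fintype.card C := Fintype.card_pos_iff.2 ⟨χ 0⟩
    have hD_pos : 0 < Fintype.card D := Fintype.card_pos_iff.2 ⟨χ' (χ 0) 0⟩
    calc (S ∪ Finset.univ.biUnion S').card
        ≤ (Fintype.card C - 1) * Fintype.card ι +
          Fintype.card C * ((Fintype.card D - 1) * Fintype.card ι) :=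
        (Finset.card_union_le _ _).trans (add_le_add hcard
          (Finset.card_biUnion_le_card_mul _ _ _ fun j _ ↦ hcard' j))
      _ = (Fintype.card (C × D) - 1) * Fintype.card ι := by
        rw [← mul_assoc, ← add_mul, Fintype.card_prod, Nat.mul_sub_one]
        have := Nat.le_mul_of_pos_right (Fintype.card C) hD_pos
        congr 1
        omega
  · have hfibre : (fun x ↦ (χ x, χ' (χ x) x)) ⁻¹' {(j, k)} = χ' j ⁻¹' {k} ∩ χ ⁻¹' {j} := by
      ext x
      simp only [Set.mem_preimage, Set.mem_singleton_iff, Prod.mk.injEq, Set.mem_inter_iff,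
        and_comm (a := χ' j x = k)]
      exact and_congr_right fun hj ↦ by rw [hj]
    rw [hfibre, ← Measure.restrict_apply' (hχ.measurableSet_preimage {j}), hfair',
      Measure.restrict_apply_univ, hfair, Fintype.card_prod, Nat.cast_mul, div_eq_mul_inv,
      div_eq_mul_inv, mul_assoc, div_eq_mul_inv, ENNReal.mul_inv (by simp) (by simp)]

theorem exists_fair_cuts_of_ae_mem_Ioc {p N : ℕ} [Fact p.Prime]
    (hN : (p - 1) * Fintype.card ι ≤ N) {ν : ι → Measure ℝ} [∀ i, IsFiniteMeasure (ν i)]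
    [∀ i, NullSingletonClass (ν i)] (hν : ∀ i, ∀ᵐ x ∂ν i, x ∈ Set.Ioc 0 1) :
    ∃ (t : Fin N → ℝ) (c : Fin (N + 1) → ZMod p), ∀ i j,
      (ν i).real (c ∘ cutIndex t ⁻¹' {j}) = (ν i).real Set.univ / p := by
  obtain ⟨T, c, hT, hT0, hT1, hfair⟩ :=
    exists_fair_partition_of_continuous hN fun i ↦ continuous_measureReal_Iic (ν i)
  let t : Fin N → ℝ := fun l ↦ T l.succ.castSucc
  have hunit (i : ι) : (ν i).real (Set.Iic 1) - (ν i).real (Set.Iic 0) = (ν i).real Set.univ := by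
    rw [← measureReal_sdiff (Set.Iic_subset_Iic.2 zero_le_one) measurableSet_Iic,
      Set.Iic_sdiff_Iic]
    exact measureReal_congr (Filter.eventuallyEq_univ.2 (hν i))
  refine ⟨t, c, fun i j ↦ ?_⟩
  have hpreimage : c ∘ cutIndex t ⁻¹' {j} =
      cutIndex t ⁻¹' (Finset.univ.filter fun k ↦ c k = j : Finset (Fin (N + 1))) := by
    ext x
    simp
  rw [hpreimage, ← sum_measureReal_preimage_singleton _ fun k _ ↦
    (constantOffCuts_cutIndex t).measurableSet_preimage {k}, ← hunit, ← hfair]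
  refine Finset.sum_congr rfl fun k _ ↦ measureReal_preimage_cutIndex hT ?_ k
  rw [hT0, hT1]
  exact hν i

theorem fairlySplittable_zmod (p : ℕ) [Fact p.Prime] : FairlySplittable ι (ZMod p) := by
  intro μ hfin hatom
  have hmeas : Measurable Real.sigmoid := continuous_sigmoid.measurable
  have hatom_map (i : ι) : NullSingletonClass ((μ i).map Real.sigmoid) := ⟨fun x ↦ by
    rw [Measure.map_apply hmeas (measurableSet_singleton x)]
    exact (Set.subsingleton_singleton.preimage Real.sigmoid_injective).measure_zero _⟩
  have hunit (i : ι) : ∀ᵐ x ∂(μ i).map Real.sigmoid, x ∈ Set.Ioc 0 1 :=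
    (ae_map_iff hmeas.aemeasurable measurableSet_Ioc).2
      (ae_of_all _ fun x ↦ ⟨Real.sigmoid_pos x, Real.sigmoid_le_one x⟩)
  obtain ⟨t, c, hfair⟩ := exists_fair_cuts_of_ae_mem_Ioc (p := p) le_rfl hunit
  have hcuts := (constantOffCuts_cutIndex t).comp c
  refine ⟨_, _, ?_, hcuts.comp_strictMono Real.sigmoid_strictMono continuous_sigmoid, fun i j ↦ ?_⟩
  · rw [ZMod.card]
    exact (Finset.card_le_card_of_injOn _ (fun x ↦ Finset.mem_preimage.1)
      Real.sigmoid_injective.injOn).trans (Finset.card_image_le.trans_eq (Finset.card_fin _))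
  · have hfair_ij := hfair i j
    rw [map_measureReal_apply hmeas (hcuts.measurableSet_preimage {j}),
      map_measureReal_apply hmeas MeasurableSet.univ, Set.preimage_univ] at hfair_ij
    rw [Set.preimage_comp, ← ofReal_measureReal, hfair_ij, ENNReal.ofReal_div_of_pos
      (Nat.cast_pos.2 (Fact.out : p.Prime).pos), ofReal_measureReal, ENNReal.ofReal_natCast,
      ZMod.card]

theorem fairlySplittable_fin (ι : Type*) [Fintype ι] {r : ℕ} (hr : 0 < r) :
    FairlySplittable ι (Fin r) := by
  induction r using induction_on_primes with
  | zero => exact absurd hr (lt_irrefl 0)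
  | one => exact fairlySplittable_unique
  | prime_mul p r hp ih =>
    have : Fact p.Prime := ⟨hp⟩
    have hprime : FairlySplittable ι (Fin p) :=
      (fairlySplittable_zmod p).congr (Fintype.equivFinOfCardEq (ZMod.card p))
    exact (hprime.prod (ih (Nat.pos_of_mul_pos_left hr))).congr finProdFinEquiv

end Splitting

end NecklaceSplitting

open NecklaceSplitting in
theorem necklace_splitting_general {ι : Type*} [Fintype ι] {r n : ℕ} (hr : 0 < r)
    (hn : (r - 1) * Fintype.card ι ≤ n) (μ : ι → Measure ℝ) [∀ i, IsFiniteMeasure (μ i)]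
    [∀ i, NullSingletonClass (μ i)] :
    ∃ (t : Fin n → ℝ) (c : Fin (n + 1) → Fin r), Monotone t ∧
      ∀ i j, μ i (⋃ k, ⋃ (_ : c k = j), cutInterval t k) = μ i Set.univ / r := by
  obtain ⟨S, χ, hcard, hχ, hfair⟩ :=
    fairlySplittable_fin ι hr μ (fun _ ↦ inferInstance) fun _ ↦ inferInstance
  rw [Fintype.card_fin] at hcard hfair
  obtain ⟨U, hSU, hU⟩ := Infinite.exists_superset_card_eq S n (hcard.trans hn)
  let t : Fin n ↪o ℝ := U.orderEmbOfFin hU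
  have hχt : ConstantOffCuts (Finset.univ.image t) χ := by
    rw [Finset.image_orderEmbOfFin_univ]
    exact hχ.mono hSU
  have : Nonempty (Fin r) := ⟨χ 0⟩
  obtain ⟨c, hc⟩ := hχt.exists_comp_cutIndex t.monotone
  exact ⟨t, c, t.monotone, fun i j ↦ by
    rw [measure_iUnion_cutInterval t.monotone hc, hfair]⟩

/-- Alon's necklace splitting theorem (continuous version): `m` measures on `ℝ`
can be split fairly among `r` thieves using `(r-1)m` cuts. -/
theorem necklace_splitting (m r : ℕ) (hm : 0 < m) (hr : 0 < r)
    (μ : Fin m → Measure ℝ)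
    (hprob : ∀ i, IsProbabilityMeasure (μ i))
    (hac : ∀ i, μ i ≪ volume) :
    ∃ (t : Fin ((r - 1) * m) → ℝ) (c : Fin ((r - 1) * m + 1) → Fin r),
      Monotone t ∧
      ∀ (i : Fin m) (j : Fin r),
        μ i (⋃ k, ⋃ (_ : c k = j),
          {x : ℝ | (∀ l : Fin ((r - 1) * m), (l : ℕ) < (k : ℕ) → t l ≤ x) ∧
                   (∀ l : Fin ((r - 1) * m), (k : ℕ) ≤ (l : ℕ) → x ≤ t l)})
          = 1 / r := by
  have (i : Fin m) : NullSingletonClass (μ i) := ⟨fun x ↦ hac i (measure_singleton x)⟩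
  simpa only [measure_univ, NecklaceSplitting.cutInterval] using
    necklace_splitting_general hr (by rw [Fintype.card_fin]) μ
end

section
/- Let m be a positive integer and let μ₁, …, μ_m be probability measures on the interval [0,1], each absolutely continuous with respect to the Lebesgue measure. Then there exist real numbers 0 = z₀ ≤ z₁ ≤ … ≤ z_m ≤ z_{m+1} = 1 and signs ε₁, …, ε_{m+1} ∈ {−1, +1} such that for every i = 1, …, m, the signed sum Σ_{k=1}^{m+1} ε_k · μ_i([z_{k−1}, z_k]) equals 0; equivalently, the union of the intervals with sign +1 and the union of the intervals with sign −1 each have μ_i-measure 1/2. -/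
open MeasureTheory

/-!
Points `x` of the unit sphere of `ℝ^(m+1)` encode signed partitions: the `k`-th interval has
relative length `x k ^ 2` and carries the sign of `x k`. The signed sums of the increments of `m`
continuous functions are then continuous odd functions of `x`, so by the Borsuk–Ulam theorem they
vanish simultaneously somewhere; for non-atomic measures take their distribution functions.

The Borsuk–Ulam theorem is reduced by the Stone–Weierstrass theorem to `n` odd polynomials `g i` in
`n + 1` variables, and further to the equations `x 0 ^ 2 + ⋯ + x n ^ 2 = 1` and
`x (i + 1) ^ D + g i x = 0` with `D` odd and larger than the degrees of the `g i`. The leading terms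
`x 0 ^ 2` and `x (i + 1) ^ D` of these equations are powers of distinct variables, so the even
polynomials of the quotient ring form a real algebra of dimension `D ^ n`, with basis the monomials
of even degree that are not divisible by any leading term. As this dimension is odd, the algebra has
a residue field `ℝ`. The resulting real values of the products `x i * x j`, one of the squares being
positive by the first equation, come from a real point `x`, which solves the system.
-/

section RealCharacters

open Module

variable {B : Type*} [CommRing B] [Algebra ℝ B]

theorem nonempty_algHom_real_of_odd_finrank_quotient (I : Ideal B) [I.IsMaximal]
    (hodd : Odd (finrank ℝ (B ⧸ I))) : Nonempty (B →ₐ[ℝ] ℝ) := by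
  let := Ideal.Quotient.field I
  have : FiniteDimensional ℝ (B ⧸ I) := .of_finrank_pos hodd.pos
  rcases Real.nonempty_algEquiv_or (B ⧸ I) with ⟨⟨e⟩⟩ | ⟨⟨e⟩⟩
  · exact ⟨e.toAlgHom.comp (Ideal.Quotient.mkₐ ℝ I)⟩
  · rw [e.toLinearEquiv.finrank_eq, Complex.finrank_real_complex] at hodd
    exact absurd hodd (by decide)

theorem nonempty_algHom_real_of_odd_finrank_module (M : Type*) [AddCommGroup M] [Module ℝ M]
    [Module B M] [IsScalarTower ℝ B M] (hodd : Odd (finrank ℝ M)) : Nonempty (B →ₐ[ℝ] ℝ) := by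
  induction hd : finrank ℝ M using Nat.strong_induction_on generalizing M with
  | _ d ih =>
    subst hd
    have : FiniteDimensional ℝ M := .of_finrank_pos hodd.pos
    have : IsArtinian B M := isArtinian_of_tower ℝ inferInstance
    have : Nontrivial M := nontrivial_of_finrank_pos hodd.pos
    obtain ⟨S, hS⟩ := IsAtomic.exists_atom (Submodule B M)
    have hsum : finrank ℝ (M ⧸ S) + finrank ℝ S = finrank ℝ M :=
      (S.restrictScalars ℝ).finrank_quotient_add_finrank
    have hsimple : IsSimpleModule B S := isSimpleModule_iff_isAtom.2 hS
    rcases Nat.even_or_odd (finrank ℝ S) with hS_even | hS_odd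
    · have : FiniteDimensional ℝ S := inferInstanceAs (FiniteDimensional ℝ (S.restrictScalars ℝ))
      have : Nontrivial S := IsSimpleModule.nontrivial B S
      have hS_pos : 0 < finrank ℝ S := finrank_pos
      exact ih _ (by omega) (M ⧸ S) (by grind) rfl
    · obtain ⟨I, hI, ⟨e⟩⟩ := isSimpleModule_iff_quot_maximal.1 hsimple
      rw [(e.restrictScalars ℝ).finrank_eq] at hS_odd
      exact nonempty_algHom_real_of_odd_finrank_quotient I hS_odd

end RealCharacters

section LeadingTermBasis

open MvPolynomial MonomialOrder

variable {σ R : Type*} [CommRing R] {m : MonomialOrder σ} {b : (σ →₀ ℕ) → MvPolynomial σ R}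

theorem linearIndependent_of_monic_of_degree_eq (hmonic : ∀ α, m.Monic (b α))
    (hdeg : ∀ α, m.degree (b α) = α) : LinearIndependent R b := by
  rw [linearIndependent_iff]
  intro l hl
  by_contra hne
  obtain ⟨α, hα, hmax⟩ := l.support.exists_max_image m.toSyn (Finsupp.support_nonempty_iff.2 hne)
  have hcoeff : ∀ β ∈ l.support, β ≠ α → coeff α (l β • b β) = 0 := fun β hβ hne => by
    have hlt : m.degree (b β) ≺[m] α := by
      rw [hdeg]
      exact (hmax β hβ).lt_of_ne (m.toSyn.injective.ne hne)
    rw [coeff_smul, coeff_eq_zero_of_lt hlt, smul_zero]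
  have hlead : coeff α (b α) = 1 := by simpa only [hdeg] using (hmonic α).coeff_degree
  have hzero := congrArg (coeff α) hl
  rw [Finsupp.linearCombination_apply, Finsupp.sum, coeff_sum,
    Finset.sum_eq_single_of_mem α hα hcoeff, coeff_smul, hlead, coeff_zero, smul_eq_mul,
    mul_one] at hzero
  exact Finsupp.mem_support_iff.1 hα hzero

theorem span_range_eq_top_of_monic_of_degree_eq (hmonic : ∀ α, m.Monic (b α))
    (hdeg : ∀ α, m.degree (b α) = α) : Submodule.span R (Set.range b) = ⊤ := by
  refine eq_top_iff.2 fun p _ => ?_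
  induction h : m.toSyn (m.degree p) using WellFoundedLT.induction generalizing p with
  | _ d ih =>
    subst h
    set q := p - m.leadingCoeff p • b (m.degree p) with hq
    suffices q ∈ Submodule.span R (Set.range b) by
      rw [← sub_add_cancel p (m.leadingCoeff p • b (m.degree p))]
      exact add_mem this (Submodule.smul_mem _ _ (Submodule.subset_span ⟨_, rfl⟩))
    have hqle : m.degree q ≼[m] m.degree p := by
      refine degree_sub_le.trans (sup_le le_rfl (degree_smul_le.trans ?_))
      rw [hdeg]
    have hqcoeff : coeff (m.degree p) q = 0 := by
      have hlead : coeff (m.degree p) (b (m.degree p)) = 1 := by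
        simpa only [hdeg] using (hmonic (m.degree p)).coeff_degree
      rw [hq, coeff_sub, coeff_smul, hlead, smul_eq_mul, mul_one, leadingCoeff, sub_self]
    by_cases hq0 : q = 0
    · rw [hq0]
      exact zero_mem _
    · refine ih _ (hqle.lt_of_ne fun heq => hq0 ?_) q trivial rfl
      rwa [← m.toSyn.injective heq, coeff_degree_eq_zero_iff] at hqcoeff

end LeadingTermBasis

section PowerLeadingTerm

open MvPolynomial MonomialOrder

variable {σ R : Type*} [CommRing R]

theorem degLex_degree_lt_single_of_totalDegree_lt [LinearOrder σ] [WellFoundedGT σ]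
    {p : MvPolynomial σ R} {d : ℕ} (hp : p.totalDegree < d) (i : σ) :
    degLex.degree p ≺[degLex] Finsupp.single i d := by
  rw [degLex_lt_iff, Finsupp.DegLex.lt_iff]
  left
  simpa [degree_degLexDegree] using hp

variable [IsDomain R] {m : MonomialOrder σ} {i : σ} {d : ℕ} {g : MvPolynomial σ R}

theorem monic_X_pow_add (hg : m.degree g ≺[m] Finsupp.single i d) : m.Monic (X i ^ d + g) := by
  refine monic_X.pow.add_of_lt ?_
  rwa [degree_pow, degree_X, Finsupp.smul_single, smul_eq_mul, mul_one]

theorem degree_X_pow_add (hg : m.degree g ≺[m] Finsupp.single i d) :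
    m.degree (X i ^ d + g) = Finsupp.single i d := by
  have hX : m.degree (X i ^ d : MvPolynomial σ R) = Finsupp.single i d := by
    rw [degree_pow, degree_X, Finsupp.smul_single, smul_eq_mul, mul_one]
  rw [degree_add_of_lt (by rwa [hX]), hX]

end PowerLeadingTerm

section LinearAlgebra

open Module

variable {ι R M N : Type*} [CommRing R] [Nontrivial R] [AddCommGroup M] [Module R M]
  [AddCommGroup N] [Module R N]

theorem finrank_map_span_image_of_ker_eq_span_image {b : ι → M} (hb : LinearIndependent R b)
    {φ : M →ₗ[R] N} {s : Set ι} (hφ : LinearMap.ker φ = Submodule.span R (b '' s)) (t : Set ι) :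
    finrank R ((Submodule.span R (b '' t)).map φ) = Nat.card ↥(t \ s) := by
  have hvanish : ∀ i ∈ s, φ (b i) = 0 := fun i hi => by
    rw [← LinearMap.mem_ker, hφ]
    exact Submodule.subset_span ⟨i, hi, rfl⟩
  have hspan : (Submodule.span R (b '' t)).map φ =
      Submodule.span R (Set.range fun i : ↥(t \ s) => φ (b i)) := by
    rw [Submodule.map_span]
    refine le_antisymm (Submodule.span_le.2 ?_) (Submodule.span_mono ?_)
    · rintro _ ⟨_, ⟨i, hi, rfl⟩, rfl⟩
      by_cases his : i ∈ s
      · rw [hvanish i his]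
        exact zero_mem _
      · exact Submodule.subset_span ⟨⟨i, hi, his⟩, rfl⟩
    · rintro _ ⟨i, rfl⟩
      exact ⟨b i, ⟨i, i.2.1, rfl⟩, rfl⟩
  have hindep : LinearIndependent R (fun i : ↥(t \ s) => φ (b i)) := by
    refine (hb.comp _ Subtype.val_injective).map (f := φ) ?_
    rw [hφ, Set.range_comp, Subtype.range_coe]
    exact hb.disjoint_span_image Set.disjoint_sdiff_left
  rw [hspan, finrank_eq_nat_card_basis (Basis.span hindep)]

end LinearAlgebra

section MixedRadix

open MvPolynomial

variable {σ R : Type*} [Fintype σ] [CommRing R] (f : σ → MvPolynomial σ R) (e : σ → ℕ)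

/-- The substitute for the monomial `X ^ α` obtained by writing each exponent as
`α i = r + e i * q` with `r < e i` and replacing `X i ^ (e i)` by `f i`. Exponents `α` with
`α i < e i` for all `i` give back `X ^ α`, all others give multiples of some `f i`. -/
noncomputable def radixMonomial (α : σ →₀ ℕ) : MvPolynomial σ R :=
  ∏ i, X i ^ (α i % e i) * f i ^ (α i / e i)

variable {f e}

theorem radixMonomial_add_single (he : ∀ i, 0 < e i) (α : σ →₀ ℕ) (i : σ) :
    radixMonomial f e (α + Finsupp.single i (e i)) = radixMonomial f e α * f i := by
  classical
  have hfactor : ∀ j, X j ^ ((α + Finsupp.single i (e i)) j % e j) *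
      f j ^ ((α + Finsupp.single i (e i)) j / e j) =
      X j ^ (α j % e j) * f j ^ (α j / e j) * if j = i then f j else 1 := fun j => by
    rcases eq_or_ne j i with rfl | hji
    · rw [Finsupp.add_apply, Finsupp.single_eq_same, Nat.add_mod_right,
        Nat.add_div_right _ (he j), pow_succ, if_pos rfl, mul_assoc]
    · rw [Finsupp.add_apply, Finsupp.single_eq_of_ne hji, add_zero, if_neg hji, mul_one]
  simp only [radixMonomial, hfactor, Finset.prod_mul_distrib, Finset.prod_ite_eq',
    Finset.mem_univ, if_true]

theorem restrictScalars_span_range_eq_span_radixMonomial (he : ∀ i, 0 < e i)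
    (hspan : Submodule.span R (Set.range (radixMonomial f e)) = ⊤) :
    (Ideal.span (Set.range f)).restrictScalars R =
      Submodule.span R (radixMonomial f e '' {α | ∃ i, e i ≤ α i}) := by
  refine le_antisymm (fun p hp => ?_) (Submodule.span_le.2 ?_)
  · obtain ⟨c, rfl⟩ := Ideal.mem_span_range_iff_exists_fun.1 hp
    refine sum_mem fun i _ => ?_
    have hci : c i ∈ Submodule.span R (Set.range (radixMonomial f e)) := hspan ▸ trivial
    have himage := Submodule.mem_map_of_mem (f := LinearMap.mulRight R (f i)) hci
    rw [Submodule.map_span] at himage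
    refine Submodule.span_mono ?_ himage
    rintro _ ⟨_, ⟨α, rfl⟩, rfl⟩
    exact ⟨α + Finsupp.single i (e i), ⟨i, by simp⟩, radixMonomial_add_single he α i⟩
  · rintro _ ⟨α, ⟨i, hi⟩, rfl⟩
    have hα : α - Finsupp.single i (e i) + Finsupp.single i (e i) = α :=
      tsub_add_cancel_of_le (Finsupp.single_le_iff.2 hi)
    rw [← hα, radixMonomial_add_single he]
    exact Ideal.mul_mem_left _ _ (Ideal.subset_span ⟨i, rfl⟩)

variable {m : MonomialOrder σ}

theorem monic_radixMonomial (hmonic : ∀ i, m.Monic (f i)) (α : σ →₀ ℕ) :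
    m.Monic (radixMonomial f e α) :=
  MonomialOrder.Monic.prod fun i _ => MonomialOrder.monic_X.pow.mul (hmonic i).pow

theorem degree_radixMonomial [IsDomain R] (hmonic : ∀ i, m.Monic (f i))
    (hdeg : ∀ i, m.degree (f i) = Finsupp.single i (e i)) (α : σ →₀ ℕ) :
    m.degree (radixMonomial f e α) = α := by
  have hX : ∀ i, (X i : MvPolynomial σ R) ^ (α i % e i) ≠ 0 := fun i => pow_ne_zero _ (X_ne_zero i)
  have hf : ∀ i, f i ^ (α i / e i) ≠ 0 := fun i => pow_ne_zero _ (hmonic i).ne_zero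
  rw [radixMonomial, MonomialOrder.degree_prod fun i _ => mul_ne_zero (hX i) (hf i)]
  conv_rhs => rw [← Finsupp.univ_sum_single α]
  refine Finset.sum_congr rfl fun i _ => ?_
  rw [MonomialOrder.degree_mul (hX i) (hf i), MonomialOrder.degree_pow, MonomialOrder.degree_pow,
    MonomialOrder.degree_X, hdeg, Finsupp.smul_single, Finsupp.smul_single, ← Finsupp.single_add,
    smul_eq_mul, smul_eq_mul, mul_one, mul_comm, Nat.mod_add_div]

end MixedRadix

section Parity

open MvPolynomial

variable {σ R : Type*} [CommRing R]

/-- The substitution `p(x) ↦ p(-x)`; its `±1`-eigenvectors are the even and the odd polynomials. -/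
noncomputable def negVars : MvPolynomial σ R →ₐ[R] MvPolynomial σ R :=
  aeval fun i => -X i

@[simp]
theorem negVars_X (i : σ) : negVars (X i : MvPolynomial σ R) = -X i :=
  aeval_X _ i

theorem negVars_negVars (p : MvPolynomial σ R) : negVars (negVars p) = p := by
  have hcomp : negVars.comp negVars = AlgHom.id R (MvPolynomial σ R) := by
    ext i
    simp
  exact DFunLike.congr_fun hcomp p

theorem eval_negVars (x : σ → R) (p : MvPolynomial σ R) : eval x (negVars p) = eval (-x) p := by
  have hcomp : (aeval x).comp negVars = (aeval (-x) : MvPolynomial σ R →ₐ[R] R) := by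
    ext i
    simp
  exact DFunLike.congr_fun hcomp p

theorem negVars_radixMonomial [Fintype σ] {f : σ → MvPolynomial σ R} {e : σ → ℕ}
    (hf : ∀ i, negVars (f i) = (-1) ^ e i * f i) (α : σ →₀ ℕ) :
    negVars (radixMonomial f e α) = (-1) ^ α.degree * radixMonomial f e α := by
  rw [radixMonomial, map_prod, Finsupp.degree_eq_sum, ← Finset.prod_pow_eq_pow_sum,
    ← Finset.prod_mul_distrib]
  refine Finset.prod_congr rfl fun i _ => ?_
  have hsign : (-1 : MvPolynomial σ R) ^ α i = (-1) ^ (α i % e i) * ((-1) ^ e i) ^ (α i / e i) := by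
    rw [← pow_mul, ← pow_add, Nat.mod_add_div]
  rw [map_mul, map_pow, map_pow, negVars_X, hf, neg_pow, mul_pow, hsign, mul_mul_mul_comm]

variable (σ R) in
/-- The algebra of polynomials all of whose monomials have even degree, presented by its
generators. -/
noncomputable def evenSubalgebra : Subalgebra R (MvPolynomial σ R) :=
  Algebra.adjoin R (Set.range fun ij : σ × σ => X ij.1 * X ij.2)

theorem X_mul_X_mem_evenSubalgebra (i j : σ) :
    (X i * X j : MvPolynomial σ R) ∈ evenSubalgebra σ R :=
  Algebra.subset_adjoin ⟨(i, j), rfl⟩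

theorem negVars_eq_self_of_mem_evenSubalgebra {p : MvPolynomial σ R}
    (hp : p ∈ evenSubalgebra σ R) : negVars p = p := by
  have hle : evenSubalgebra σ R ≤ AlgHom.equalizer negVars (AlgHom.id R _) := by
    refine Algebra.adjoin_le ?_
    rintro _ ⟨ij, rfl⟩
    simp
  exact hle hp

-- Multiplication by a variable exchanges the two claims, so they are proved together.
theorem add_negVars_mem_and_X_mul_sub_negVars_mem_evenSubalgebra (p : MvPolynomial σ R) :
    p + negVars p ∈ evenSubalgebra σ R ∧ ∀ k, X k * (p - negVars p) ∈ evenSubalgebra σ R := by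
  induction p using MvPolynomial.induction_on with
  | C a =>
    have hC : negVars (C a) = (C a : MvPolynomial σ R) := negVars.commutes a
    rw [hC]
    refine ⟨add_mem ?_ ?_, fun k => by simp⟩ <;> exact (evenSubalgebra σ R).algebraMap_mem a
  | add p q hp hq =>
    simp only [map_add, add_add_add_comm p q, add_sub_add_comm, mul_add]
    exact ⟨add_mem hp.1 hq.1, fun k => add_mem (hp.2 k) (hq.2 k)⟩
  | mul_X p i hp =>
    refine ⟨?_, fun k => ?_⟩
    · convert! hp.2 i using 1
      rw [map_mul, negVars_X]
      ring
    · convert! mul_mem (X_mul_X_mem_evenSubalgebra k i) hp.1 using 1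
      rw [map_mul, negVars_X]
      ring

theorem mem_evenSubalgebra_iff [Invertible (2 : R)] {p : MvPolynomial σ R} :
    p ∈ evenSubalgebra σ R ↔ negVars p = p := by
  refine ⟨negVars_eq_self_of_mem_evenSubalgebra, fun hp => ?_⟩
  have hdouble := (add_negVars_mem_and_X_mul_sub_negVars_mem_evenSubalgebra p).1
  rw [hp, ← two_smul R] at hdouble
  simpa using (evenSubalgebra σ R).smul_mem hdouble (⅟(2 : R))

theorem toSubmodule_evenSubalgebra_eq_span_radixMonomial [Fintype σ] [Invertible (2 : R)]
    {f : σ → MvPolynomial σ R} {e : σ → ℕ} (hf : ∀ i, negVars (f i) = (-1) ^ e i * f i)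
    (hspan : Submodule.span R (Set.range (radixMonomial f e)) = ⊤) :
    (evenSubalgebra σ R).toSubmodule =
      Submodule.span R (radixMonomial f e '' {α | Even α.degree}) := by
  refine le_antisymm (fun p hp => ?_) (Submodule.span_le.2 ?_)
  · have hsym : ∀ q, q + negVars q ∈
        Submodule.span R (radixMonomial f e '' {α | Even α.degree}) := fun q => by
      have hq : q ∈ Submodule.span R (Set.range (radixMonomial f e)) := hspan ▸ trivial
      have himage := Submodule.mem_map_of_mem
        (f := LinearMap.id + (negVars (σ := σ) (R := R)).toLinearMap) hq
      rw [Submodule.map_span] at himage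
      refine Submodule.span_le.2 ?_ himage
      rintro _ ⟨_, ⟨α, rfl⟩, rfl⟩
      rw [LinearMap.add_apply, LinearMap.id_apply, AlgHom.toLinearMap_apply,
        negVars_radixMonomial hf]
      rcases Nat.even_or_odd α.degree with hα | hα
      · rw [hα.neg_one_pow, one_mul]
        exact add_mem (Submodule.subset_span ⟨α, hα, rfl⟩) (Submodule.subset_span ⟨α, hα, rfl⟩)
      · rw [hα.neg_one_pow, neg_one_mul, add_neg_cancel]
        exact zero_mem _
    have hdouble := hsym p
    rw [negVars_eq_self_of_mem_evenSubalgebra hp, ← two_smul R] at hdouble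
    simpa using Submodule.smul_mem _ (⅟(2 : R)) hdouble
  · rintro _ ⟨α, hα : Even α.degree, rfl⟩
    exact mem_evenSubalgebra_iff.2 (by rw [negVars_radixMonomial hf, hα.neg_one_pow, one_mul])

end Parity

section EvenCharacters

open MvPolynomial Module

theorem finrank_map_evenSubalgebra_quotient {σ R : Type*} [Finite σ] [CommRing R] [IsDomain R]
    [Invertible (2 : R)] {m : MonomialOrder σ} {f : σ → MvPolynomial σ R} {e : σ → ℕ}
    (he : ∀ i, 0 < e i) (hmonic : ∀ i, m.Monic (f i))
    (hdeg : ∀ i, m.degree (f i) = Finsupp.single i (e i))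
    (hparity : ∀ i, negVars (f i) = (-1) ^ e i * f i) :
    finrank R ((evenSubalgebra σ R).map (Ideal.Quotient.mkₐ R (Ideal.span (Set.range f)))) =
      Nat.card {α : σ →₀ ℕ | Even α.degree ∧ ∀ i, α i < e i} := by
  cases nonempty_fintype σ
  have hbmonic := monic_radixMonomial (e := e) hmonic
  have hbdeg := degree_radixMonomial hmonic hdeg
  have hspan := span_range_eq_top_of_monic_of_degree_eq hbmonic hbdeg
  have hker : LinearMap.ker (Ideal.Quotient.mkₐ R (Ideal.span (Set.range f))).toLinearMap =
      Submodule.span R (radixMonomial f e '' {α | ∃ i, e i ≤ α i}) := by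
    rw [← restrictScalars_span_range_eq_span_radixMonomial he hspan]
    ext p
    exact Ideal.Quotient.eq_zero_iff_mem
  have hdiff : {α : σ →₀ ℕ | Even α.degree ∧ ∀ i, α i < e i} =
      {α | Even α.degree} \ {α | ∃ i, e i ≤ α i} := by
    ext α
    simp
  rw [hdiff, ← finrank_map_span_image_of_ker_eq_span_image
    (linearIndependent_of_monic_of_degree_eq hbmonic hbdeg) hker,
    ← toSubmodule_evenSubalgebra_eq_span_radixMonomial hparity hspan, ← Subalgebra.map_toSubmodule]
  rfl

theorem exists_algHom_evenSubalgebra_real_of_odd_card {σ : Type*} [Finite σ] {m : MonomialOrder σ}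
    {f : σ → MvPolynomial σ ℝ} {e : σ → ℕ} (he : ∀ i, 0 < e i) (hmonic : ∀ i, m.Monic (f i))
    (hdeg : ∀ i, m.degree (f i) = Finsupp.single i (e i))
    (hparity : ∀ i, negVars (f i) = (-1) ^ e i * f i)
    (hcard : Odd (Nat.card {α : σ →₀ ℕ | Even α.degree ∧ ∀ i, α i < e i})) :
    ∃ χ : evenSubalgebra σ ℝ →ₐ[ℝ] ℝ,
      ∀ p : evenSubalgebra σ ℝ, (p : MvPolynomial σ ℝ) ∈ Ideal.span (Set.range f) → χ p = 0 := by
  rw [← finrank_map_evenSubalgebra_quotient he hmonic hdeg hparity] at hcard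
  let q := Ideal.Quotient.mkₐ ℝ (Ideal.span (Set.range f))
  obtain ⟨ψ⟩ := nonempty_algHom_real_of_odd_finrank_module (B := (evenSubalgebra σ ℝ).map q)
    ((evenSubalgebra σ ℝ).map q) hcard
  let π : evenSubalgebra σ ℝ →ₐ[ℝ] (evenSubalgebra σ ℝ).map q :=
    (q.comp (evenSubalgebra σ ℝ).val).codRestrict _ fun p => ⟨p, p.2, rfl⟩
  refine ⟨ψ.comp π, fun p hp => ?_⟩
  have hπ : π p = 0 := Subtype.ext (Ideal.Quotient.eq_zero_iff_mem.2 hp)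
  rw [AlgHom.comp_apply, hπ, map_zero]

theorem exists_eval_eq_of_algHom_evenSubalgebra {σ : Type*} (χ : evenSubalgebra σ ℝ →ₐ[ℝ] ℝ)
    {k : σ} (hk : 0 < χ ⟨X k * X k, X_mul_X_mem_evenSubalgebra k k⟩) :
    ∃ x : σ → ℝ, x k ≠ 0 ∧ ∀ p : evenSubalgebra σ ℝ, χ p = eval x (p : MvPolynomial σ ℝ) := by
  let c : σ → σ → ℝ := fun i j => χ ⟨X i * X j, X_mul_X_mem_evenSubalgebra i j⟩
  have hc : ∀ i j, c i k * c j k = c i j * c k k := fun i j => by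
    simp only [c, ← map_mul]
    congr 1
    exact Subtype.ext (by simp only [MulMemClass.mk_mul_mk]; ring)
  let x : σ → ℝ := fun i => c i k / √(c k k)
  have hx : ∀ i j, x i * x j = c i j := fun i j => by
    rw [div_mul_div_comm, Real.mul_self_sqrt hk.le, hc, mul_div_cancel_right₀ _ hk.ne']
  refine ⟨x, (div_pos hk (Real.sqrt_pos.2 hk)).ne', fun p => ?_⟩
  have heq : χ = (aeval x).comp (evenSubalgebra σ ℝ).val := by
    refine AlgHom.adjoin_ext ?_
    rintro _ ⟨⟨i, j⟩, rfl⟩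
    change c i j = aeval x (X i * X j)
    rw [map_mul, aeval_X, aeval_X, hx]
  rw [heq]
  rfl

end EvenCharacters

section PolynomialBorsukUlam

open MvPolynomial MonomialOrder

-- The parity of the degree determines `α 0 ∈ {0, 1}` from the other exponents.
theorem natCard_even_degree_lt_cons_two {n : ℕ} (e : Fin n → ℕ) :
    Nat.card {α : Fin (n + 1) →₀ ℕ | Even α.degree ∧ ∀ i, α i < (Fin.cons 2 e : _ → ℕ) i} =
      ∏ i, e i := by
  have hdegree : ∀ α : Fin (n + 1) →₀ ℕ, α.degree = α 0 + ∑ i : Fin n, α i.succ := fun α => by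
    rw [Finsupp.degree_eq_sum, Fin.sum_univ_succ]
  simp only [Fin.forall_fin_succ, Fin.cons_zero, Fin.cons_succ, hdegree]
  let tail : {α : Fin (n + 1) →₀ ℕ | Even (α 0 + ∑ i : Fin n, α i.succ) ∧ α 0 < 2 ∧
      ∀ i : Fin n, α i.succ < e i} → ∀ i, Fin (e i) := fun α i => ⟨α.1 i.succ, α.2.2.2 i⟩
  have htail : Function.Bijective tail := by
    refine ⟨?_, fun v => ?_⟩
    · rintro ⟨α, hα, hα0, _⟩ ⟨β, hβ, hβ0, _⟩ heq
      have hsucc : ∀ i : Fin n, α i.succ = β i.succ := fun i => congrArg Fin.val (congrFun heq i)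
      have hzero : α 0 = β 0 := by
        simp only [hsucc] at hα
        grind
      exact Subtype.ext (Finsupp.ext (Fin.cases hzero hsucc))
    · refine ⟨⟨Finsupp.equivFunOnFinite.symm
        (Fin.cons ((∑ i, (v i : ℕ)) % 2) fun i => (v i : ℕ)), ?_, ?_, ?_⟩, ?_⟩
      · simp only [Finsupp.equivFunOnFinite_symm_apply_apply, Fin.cons_zero, Fin.cons_succ]
        grind
      · exact Nat.mod_lt _ two_pos
      · exact fun i => (v i).2
      · rfl
  rw [Nat.card_congr (Equiv.ofBijective tail htail), Nat.card_pi]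
  simp only [Nat.card_fin]

theorem degLex_degree_sum_X_sq_sub_one_lt {n : ℕ} {R : Type*} [CommRing R] [IsDomain R] :
    degLex.degree (∑ i : Fin n, X i.succ ^ 2 - 1 : MvPolynomial (Fin (n + 1)) R) ≺[degLex]
      Finsupp.single 0 2 := by
  have hsingle : ∀ i : Fin n,
      Finsupp.single i.succ 2 ≺[degLex] (Finsupp.single 0 2 : Fin (n + 1) →₀ ℕ) := fun i => by
    rw [← mul_one 2, ← smul_eq_mul, ← Finsupp.smul_single, ← Finsupp.smul_single, map_nsmul,
      map_nsmul]
    exact nsmul_lt_nsmul_right two_ne_zero (degLex_single_lt_iff.2 i.succ_pos)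
  have hone : degLex.degree (1 : MvPolynomial (Fin (n + 1)) R) ≺[degLex] Finsupp.single 0 2 :=
    degLex_degree_lt_single_of_totalDegree_lt (by simp) 0
  have hpos : 0 < degLex.toSyn (Finsupp.single 0 2 : Fin (n + 1) →₀ ℕ) := by
    rwa [degree_one, map_zero] at hone
  refine degree_sub_le.trans_lt (max_lt ?_ hone)
  refine degree_sum_le.trans_lt ((Finset.sup_lt_iff hpos).2 fun i _ => ?_)
  rw [degree_pow, degree_X, Finsupp.smul_single]
  exact hsingle i

theorem exists_sum_sq_eq_one_and_eval_eq_zero {σ : Type*} [Fintype σ]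
    (χ : evenSubalgebra σ ℝ →ₐ[ℝ] ℝ) {I : Ideal (MvPolynomial σ ℝ)}
    (hχ : ∀ p : evenSubalgebra σ ℝ, (p : MvPolynomial σ ℝ) ∈ I → χ p = 0)
    (hsphere : ∑ i, X i ^ 2 - 1 ∈ I) :
    ∃ x : σ → ℝ, ∑ i, x i ^ 2 = 1 ∧ ∀ p ∈ I, negVars p = -p → eval x p = 0 := by
  have hsphere_even : ∑ i, X i ^ 2 - 1 ∈ evenSubalgebra σ ℝ :=
    mem_evenSubalgebra_iff.2 (by simp)
  have hsum : ∑ i, χ ⟨X i * X i, X_mul_X_mem_evenSubalgebra i i⟩ = 1 := by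
    rw [← map_sum, ← sub_eq_zero, ← map_one χ, ← map_sub, ← hχ ⟨_, hsphere_even⟩ hsphere]
    congr 1
    exact Subtype.ext (by simp [pow_two])
  obtain ⟨k, -, hk⟩ : ∃ k ∈ Finset.univ, 0 < χ ⟨X k * X k, X_mul_X_mem_evenSubalgebra k k⟩ :=
    Finset.exists_lt_of_sum_lt (by rw [hsum, Finset.sum_const_zero]; exact one_pos)
  obtain ⟨x, hxk, hx⟩ := exists_eval_eq_of_algHom_evenSubalgebra χ hk
  refine ⟨x, ?_, fun p hp hodd => ?_⟩
  · simpa [hx, pow_two] using hsum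
  · have heven : p * X k ∈ evenSubalgebra σ ℝ :=
      mem_evenSubalgebra_iff.2 (by rw [map_mul, hodd, negVars_X, neg_mul_neg])
    have hzero := hχ ⟨_, heven⟩ (I.mul_mem_right _ hp)
    rw [hx, map_mul, eval_X] at hzero
    exact (mul_eq_zero.1 hzero).resolve_right hxk

theorem exists_sum_sq_eq_one_and_pow_add_eval_eq_zero {n D : ℕ} (hD : Odd D)
    {g : Fin n → MvPolynomial (Fin (n + 1)) ℝ} (hodd : ∀ i, negVars (g i) = -g i)
    (hdeg : ∀ i, (g i).totalDegree < D) :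
    ∃ x : Fin (n + 1) → ℝ, ∑ i, x i ^ 2 = 1 ∧ ∀ i, x i.succ ^ D + eval x (g i) = 0 := by
  let e : Fin (n + 1) → ℕ := Fin.cons 2 fun _ => D
  let h : Fin (n + 1) → MvPolynomial (Fin (n + 1)) ℝ := Fin.cons (∑ i : Fin n, X i.succ ^ 2 - 1) g
  let f : Fin (n + 1) → MvPolynomial (Fin (n + 1)) ℝ := fun i => X i ^ e i + h i
  have hlower : ∀ i, degLex.degree (h i) ≺[degLex] Finsupp.single i (e i) :=
    Fin.cases degLex_degree_sum_X_sq_sub_one_lt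
      fun i => degLex_degree_lt_single_of_totalDegree_lt (hdeg i) i.succ
  have he : ∀ i, 0 < e i := Fin.cases two_pos fun _ => hD.pos
  have hparity : ∀ i, negVars (f i) = (-1) ^ e i * f i := by
    refine Fin.cases (by simp [f, e, h]) fun i => ?_
    simp only [f, e, h, Fin.cons_succ, map_add, map_pow, negVars_X, hodd, hD.neg_pow]
    ring
  have hcard : Odd (Nat.card {α : Fin (n + 1) →₀ ℕ | Even α.degree ∧ ∀ i, α i < e i}) := by
    rw [natCard_even_degree_lt_cons_two, Finset.prod_const]
    exact hD.pow
  obtain ⟨χ, hχ⟩ := exists_algHom_evenSubalgebra_real_of_odd_card he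
    (fun i => monic_X_pow_add (hlower i)) (fun i => degree_X_pow_add (hlower i)) hparity hcard
  have hmem : ∀ i, f i ∈ Ideal.span (Set.range f) := fun i => Ideal.subset_span ⟨i, rfl⟩
  have hsphere : ∑ i, X i ^ 2 - 1 = f 0 := by
    simp only [f, e, h, Fin.cons_zero, Fin.sum_univ_succ]
    ring
  obtain ⟨x, hx, hzero⟩ := exists_sum_sq_eq_one_and_eval_eq_zero χ hχ (hsphere ▸ hmem 0)
  refine ⟨x, hx, fun i => ?_⟩
  have hf : negVars (f i.succ) = -f i.succ := by
    rw [hparity]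
    simp [e, hD.neg_one_pow]
  simpa [f, e, h] using hzero _ (hmem i.succ) hf

-- For the system scaled by `δ⁻¹` the leading terms become a perturbation of size at most `δ`.
theorem exists_sum_sq_eq_one_and_abs_eval_le {n : ℕ} {g : Fin n → MvPolynomial (Fin (n + 1)) ℝ}
    (hodd : ∀ i, negVars (g i) = -g i) {δ : ℝ} (hδ : 0 < δ) :
    ∃ x : Fin (n + 1) → ℝ, ∑ i, x i ^ 2 = 1 ∧ ∀ i, |eval x (g i)| ≤ δ := by
  have hdeg : ∀ i, (δ⁻¹ • g i).totalDegree < 2 * ∑ i, (g i).totalDegree + 1 := fun i => by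
    have hle := (totalDegree_smul_le δ⁻¹ (g i)).trans
      (Finset.single_le_sum_of_canonicallyOrdered (f := fun i => (g i).totalDegree)
        (Finset.mem_univ i))
    omega
  obtain ⟨x, hx, hzero⟩ := exists_sum_sq_eq_one_and_pow_add_eval_eq_zero
    (odd_two_mul_add_one _) (fun i => by rw [map_smul, hodd, smul_neg]) hdeg
  refine ⟨x, hx, fun i => ?_⟩
  have habs : |x i.succ| ≤ 1 := by
    rw [← sq_le_one_iff_abs_le_one, ← hx]
    exact Finset.single_le_sum (f := fun i => x i ^ 2) (fun i _ => sq_nonneg _) (Finset.mem_univ _)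
  have heval : eval x (g i) = -δ * x i.succ ^ (2 * ∑ i, (g i).totalDegree + 1) := by
    rw [eq_neg_of_add_eq_zero_left (hzero i), smul_eval, neg_mul_neg, mul_inv_cancel_left₀ hδ.ne']
  rw [heval, abs_mul, abs_neg, abs_of_pos hδ, abs_pow]
  exact mul_le_of_le_one_right hδ.le (pow_le_one₀ (abs_nonneg _) habs)

end PolynomialBorsukUlam

section BorsukUlam

open MvPolynomial

variable {X ι : Type*} [TopologicalSpace X] [CompactSpace X]

theorem exists_mvPolynomial_abs_eval_sub_lt {c : ι → C(X, ℝ)}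
    (hc : Function.Injective fun x i => c i x) (F : C(X, ℝ)) {δ : ℝ} (hδ : 0 < δ) :
    ∃ p : MvPolynomial ι ℝ, ∀ x, |eval (fun i => c i x) p - F x| < δ := by
  have hsep : (aeval (R := ℝ) c).range.SeparatesPoints := fun x y hxy => by
    obtain ⟨i, hi⟩ := Function.ne_iff.1 (hc.ne hxy)
    exact ⟨c i, ⟨c i, ⟨.X i, aeval_X c i⟩, rfl⟩, hi⟩
  obtain ⟨⟨_, p, rfl⟩, hp⟩ :=
    ContinuousMap.exists_mem_subalgebra_near_continuousMap_of_separatesPoints _ hsep F δ hδ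
  refine ⟨p, fun x => ?_⟩
  have heval : eval (fun i => c i x) p = aeval c p x := by
    have hcomp : aeval (fun i => c i x) = (ContinuousMap.evalAlgHom ℝ ℝ x).comp (aeval c) := by
      ext i
      simp
    exact DFunLike.congr_fun hcomp p
  rw [heval]
  exact (ContinuousMap.norm_lt_iff _ hδ).1 hp x

theorem exists_odd_mvPolynomial_abs_eval_sub_lt [Neg X] {c : ι → C(X, ℝ)}
    (hc : Function.Injective fun x i => c i x) (hc_odd : ∀ i x, c i (-x) = -c i x) {F : C(X, ℝ)}
    (hF : ∀ x, F (-x) = -F x) {δ : ℝ} (hδ : 0 < δ) :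
    ∃ p : MvPolynomial ι ℝ, negVars p = -p ∧ ∀ x, |eval (fun i => c i x) p - F x| < δ := by
  obtain ⟨p, hp⟩ := exists_mvPolynomial_abs_eval_sub_lt hc F hδ
  refine ⟨(1 / 2 : ℝ) • (p - negVars p), ?_, fun x => ?_⟩
  · rw [map_smul, map_sub, negVars_negVars, ← smul_neg, neg_sub]
  · have hneg : eval (fun i => c i x) (negVars p) = eval (fun i => c i (-x)) p := by
      rw [eval_negVars]
      simp only [hc_odd]
      rfl
    have hx := hp x
    have hnegx := hp (-x)
    rw [hF] at hnegx
    rw [smul_eval, map_sub, hneg]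
    grind

theorem exists_eq_zero_of_forall_exists_norm_lt {E : Type*} [NormedAddCommGroup E] {F : X → E}
    (hF : Continuous F) (happrox : ∀ δ > 0, ∃ x, ‖F x‖ < δ) : ∃ x, F x = 0 := by
  have hclosure : (0 : E) ∈ closure (Set.range F) :=
    Metric.mem_closure_range_iff.2 fun δ hδ => by simpa using happrox δ hδ
  rwa [(isCompact_range hF).isClosed.closure_eq] at hclosure

theorem exists_eq_zero_of_continuous_odd_sphere {n : ℕ}
    {F : Metric.sphere (0 : EuclideanSpace ℝ (Fin (n + 1))) 1 → Fin n → ℝ} (hF : Continuous F)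
    (hodd : ∀ x, F (-x) = -F x) : ∃ x, F x = 0 := by
  refine exists_eq_zero_of_forall_exists_norm_lt hF fun δ hδ => ?_
  let c (i : Fin (n + 1)) : C(Metric.sphere (0 : EuclideanSpace ℝ (Fin (n + 1))) 1, ℝ) :=
    ⟨fun x => x.1 i, by fun_prop⟩
  have hc : Function.Injective fun x i => c i x := fun x y hxy =>
    Subtype.ext (PiLp.ext (congrFun hxy))
  choose p hp_odd hp using fun i => exists_odd_mvPolynomial_abs_eval_sub_lt hc
    (fun _ _ => rfl) (F := ⟨fun x => F x i, by fun_prop⟩) (fun x => congrFun (hodd x) i)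
    (half_pos hδ)
  obtain ⟨x, hx, hsmall⟩ := exists_sum_sq_eq_one_and_abs_eval_le hp_odd (half_pos hδ)
  let y : Metric.sphere (0 : EuclideanSpace ℝ (Fin (n + 1))) 1 :=
    ⟨WithLp.toLp 2 x, by simp [EuclideanSpace.norm_eq, hx]⟩
  refine ⟨y, (pi_norm_lt_iff hδ).2 fun i => ?_⟩
  have hnear : |eval x (p i) - F y i| < δ / 2 := hp i y
  have hi := hsmall i
  rw [Real.norm_eq_abs]
  grind

end BorsukUlam

section SignedIncrements

variable {n : ℕ}

theorem continuous_partialSum {M : Type*} [AddMonoid M] [TopologicalSpace M] [ContinuousAdd M]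
    (k : Fin (n + 1)) : Continuous fun x : Fin n → M => Fin.partialSum x k := by
  induction k using Fin.induction with
  | zero => simpa only [Fin.partialSum_zero] using continuous_const
  | succ k ih =>
    simp only [Fin.partialSum_succ]
    fun_prop

theorem monotone_partialSum {M : Type*} [AddMonoid M] [Preorder M] [AddLeftMono M] {x : Fin n → M}
    (hx : 0 ≤ x) : Monotone (Fin.partialSum x) := by
  refine Fin.monotone_iff_le_succ.2 fun k => ?_
  rw [Fin.partialSum_succ]
  exact le_add_of_nonneg_right (hx k)

theorem partialSum_last {M : Type*} [AddCommMonoid M] (x : Fin n → M) :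
    Fin.partialSum x (Fin.last n) = ∑ k, x k := by
  rw [Fin.partialSum, Fin.val_last, List.take_of_length_le (by simp), List.sum_ofFn]

variable {E : Type*}

/-- The sum `∑ ± (g (z (k + 1)) - g (z k))` over the partition of `[0, ∑ x k ^ 2]` into
consecutive intervals of lengths `x k ^ 2`, where the sign of the `k`-th increment is that of
`x k`. The signs are expressed through positive and negative parts, which makes continuity and
oddness in `x` visible. -/
noncomputable def signedIncrementSum [AddCommGroup E] (g : ℝ → E) (x : Fin n → ℝ) : E :=
  ∑ k : Fin n, (g (Fin.partialSum (x ^ 2) k.castSucc + (x k)⁺ ^ 2) -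
    g (Fin.partialSum (x ^ 2) k.castSucc + (x k)⁻ ^ 2))

theorem signedIncrementSum_neg [AddCommGroup E] (g : ℝ → E) (x : Fin n → ℝ) :
    signedIncrementSum g (-x) = -signedIncrementSum g x := by
  simp only [signedIncrementSum, neg_sq, Pi.neg_apply, posPart_neg, negPart_neg,
    ← Finset.sum_neg_distrib, neg_sub]

theorem continuous_signedIncrementSum [AddCommGroup E] [TopologicalSpace E]
    [IsTopologicalAddGroup E] {g : ℝ → E} (hg : Continuous g) :
    Continuous (signedIncrementSum g : (Fin n → ℝ) → E) := by
  have hsum (k : Fin (n + 1)) : Continuous fun x : Fin n → ℝ => Fin.partialSum (x ^ 2) k :=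
    (continuous_partialSum k).comp (continuous_pow 2)
  unfold signedIncrementSum
  fun_prop

theorem signedIncrementSum_eq_sum_smul [AddCommGroup E] [Module ℝ E] (g : ℝ → E)
    (x : Fin n → ℝ) :
    signedIncrementSum g x = ∑ k : Fin n, (if 0 ≤ x k then 1 else -1 : ℝ) •
      (g (Fin.partialSum (x ^ 2) k.succ) - g (Fin.partialSum (x ^ 2) k.castSucc)) := by
  refine Finset.sum_congr rfl fun k _ => ?_
  rw [Fin.partialSum_succ, Pi.pow_apply]
  split_ifs with hk
  · simp [posPart_of_nonneg hk, negPart_of_nonneg hk]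
  · simp [posPart_of_nonpos (not_le.1 hk).le, negPart_of_nonpos (not_le.1 hk).le]

theorem exists_signed_partition_of_continuous {m : ℕ} {G : ℝ → Fin m → ℝ} (hG : Continuous G)
    {a b : ℝ} (hab : a ≤ b) :
    ∃ (z : Fin (m + 2) → ℝ) (ε : Fin (m + 1) → ℝ),
      Monotone z ∧ z 0 = a ∧ z (Fin.last (m + 1)) = b ∧ (∀ k, ε k = 1 ∨ ε k = -1) ∧
      ∑ k : Fin (m + 1), ε k • (G (z k.succ) - G (z k.castSucc)) = 0 := by
  let g : ℝ → Fin m → ℝ := G ∘ AffineMap.lineMap a b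
  have hg : Continuous g := hG.comp AffineMap.lineMap_continuous
  obtain ⟨⟨⟨x⟩, hx⟩, hzero⟩ := exists_eq_zero_of_continuous_odd_sphere
    (F := fun x => signedIncrementSum g x.1)
    ((continuous_signedIncrementSum hg).comp (by fun_prop)) fun x => signedIncrementSum_neg g _
  have hsum : ∑ k, x k ^ 2 = 1 := by simpa [EuclideanSpace.norm_eq] using hx
  refine ⟨fun k => AffineMap.lineMap a b (Fin.partialSum (x ^ 2) k),
    fun k => if 0 ≤ x k then 1 else -1, ?_, ?_, ?_, fun k => ite_eq_or_eq _ _ _, ?_⟩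
  · exact (AffineMap.lineMap_mono hab).comp (monotone_partialSum fun k => sq_nonneg (x k))
  · simp
  · simp [partialSum_last, hsum]
  · exact (signedIncrementSum_eq_sum_smul g x).symm.trans hzero

end SignedIncrements

section Measures

theorem intervalIntegral_one_sub_eq_measureReal_Icc {μ : Measure ℝ} [IsLocallyFiniteMeasure μ]
    [NullSingletonClass μ] (a : ℝ) {s t : ℝ} (hst : s ≤ t) :
    (∫ _ in a..t, (1 : ℝ) ∂μ) - ∫ _ in a..s, (1 : ℝ) ∂μ = μ.real (Set.Icc s t) := by
  rw [intervalIntegral.integral_interval_sub_left intervalIntegrable_const intervalIntegrable_const,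
    intervalIntegral.integral_const', Set.Ioc_eq_empty hst.not_gt, measureReal_empty, sub_zero,
    smul_eq_mul, mul_one, measureReal_congr Ioc_ae_eq_Icc]

theorem hobby_rice_general {m : ℕ} {a b : ℝ} (hab : a ≤ b) (μ : Fin m → Measure ℝ)
    [∀ i, IsLocallyFiniteMeasure (μ i)] [∀ i, NullSingletonClass (μ i)] :
    ∃ (z : Fin (m + 2) → ℝ) (ε : Fin (m + 1) → ℝ),
      Monotone z ∧ z 0 = a ∧ z (Fin.last (m + 1)) = b ∧
      (∀ k, ε k = 1 ∨ ε k = -1) ∧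
      ∀ i, ∑ k : Fin (m + 1),
        ε k * (μ i (Set.Icc (z k.castSucc) (z k.succ))).toReal = 0 := by
  have hcont : Continuous fun t i => ∫ _ in a..t, (1 : ℝ) ∂μ i := continuous_pi fun i =>
    intervalIntegral.continuous_primitive (fun _ _ => intervalIntegrable_const) a
  obtain ⟨z, ε, hz, hza, hzb, hε, hsum⟩ := exists_signed_partition_of_continuous hcont hab
  refine ⟨z, ε, hz, hza, hzb, hε, fun i => ?_⟩
  refine Eq.trans ?_ (congrFun hsum i)
  rw [Finset.sum_apply]
  refine Finset.sum_congr rfl fun k _ => ?_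
  rw [Pi.smul_apply, Pi.sub_apply, intervalIntegral_one_sub_eq_measureReal_Icc a
    (hz k.castSucc_le_succ), smul_eq_mul, measureReal_def]

end Measures

/-- The Hobby–Rice theorem: `m` measures on `[0,1]` can be simultaneously
halved using at most `m` cuts. -/
theorem hobby_rice (m : ℕ) (hm : 0 < m)
    (μ : Fin m → Measure ℝ)
    (hprob : ∀ i, IsProbabilityMeasure (μ i))
    (hac : ∀ i, μ i ≪ volume)
    (hsupp : ∀ i, μ i (Set.Icc (0 : ℝ) 1) = 1) :
    ∃ (z : Fin (m + 2) → ℝ) (ε : Fin (m + 1) → ℝ),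
      Monotone z ∧ z 0 = 0 ∧ z (Fin.last (m + 1)) = 1 ∧
      (∀ k, ε k = 1 ∨ ε k = -1) ∧
      ∀ i, ∑ k : Fin (m + 1),
        ε k * (μ i (Set.Icc (z k.castSucc) (z k.succ))).toReal = 0 := by
  have hatoms : ∀ i, NullSingletonClass (μ i) := fun i => ⟨fun x => hac i (measure_singleton x)⟩
  exact hobby_rice_general zero_le_one μ
end
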